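/- Fix an integer d ≥ 3 and a real p with 1/(d-1) < p < 1, and let q ∈ [0,1) satisfy q = (1-p+pq)^{d-1}. For 1 ≤ k ≤ d define α_k = C(d,k) p^k (1−p)^{d−k} (1 − q^k). Then for every ε > 0 and b > 0 there exist c, R > 0 such that: if 𝒢 is a regular (b,d)-expander on n vertices with girth at least R, then with probability at least 1 − exp(−c n), the random graph G ∼ 𝒢_p satisfies | D_k/n − α_k | < ε for every 1 ≤ k ≤ d, where D_k is the number of vertices of degree exactly k in a largest connected component C₁(G) of G (degrees taken in G). -/

import Mathlib

open scoped Classical symmDiff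

noncomputable section

namespace Percolation

variable {V : Type} [Fintype V] [DecidableEq V]

/-- The edge set of `G` as a finset. -/
noncomputable def edgeFinset' (G : SimpleGraph V) : Finset (Sym2 V) :=
  Finset.univ.filter (· ∈ G.edgeSet)

/-- Probability that bond percolation on `G` with parameter `p` produces a spanning
subgraph satisfying `P`. -/
noncomputable def percProb (G : SimpleGraph V) (p : ℝ) (P : SimpleGraph V → Prop) : ℝ :=
  ∑ s ∈ (edgeFinset' G).powerset,
    (p ^ s.card * (1 - p) ^ ((edgeFinset' G).card - s.card)) *
      (if P (SimpleGraph.fromEdgeSet (↑s)) then 1 else 0)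

/-- Joint probability for two independent bond percolations on `G`. -/
noncomputable def percProb2 (G : SimpleGraph V) (p₁ p₂ : ℝ)
    (P : SimpleGraph V → SimpleGraph V → Prop) : ℝ :=
  ∑ s ∈ (edgeFinset' G).powerset, ∑ t ∈ (edgeFinset' G).powerset,
    (p₁ ^ s.card * (1 - p₁) ^ ((edgeFinset' G).card - s.card)) *
    (p₂ ^ t.card * (1 - p₂) ^ ((edgeFinset' G).card - t.card)) *
      (if P (SimpleGraph.fromEdgeSet (↑s)) (SimpleGraph.fromEdgeSet (↑t)) then 1 else 0)

/-- Number of edges of `G` joining `S` to its complement. -/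
noncomputable def cutCard (G : SimpleGraph V) (S : Finset V) : ℕ :=
  ((edgeFinset' G).filter (fun e => ∃ x ∈ S, ∃ y, y ∉ S ∧ e = s(x, y))).card

/-- `G` is a `(b,d)`-expander: max degree at most `d`, and every vertex set of size at most
`n/2` has at least `b|S|` edges to its complement. -/
def IsExpander (G : SimpleGraph V) (b : ℝ) (d : ℕ) : Prop :=
  (∀ v, (G.neighborSet v).ncard ≤ d) ∧
  ∀ S : Finset V, (S.card : ℝ) ≤ Fintype.card V / 2 → b * S.card ≤ cutCard G S

/-- `G` is a regular `(b,d)`-expander. -/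
def IsRegularExpander (G : SimpleGraph V) (b : ℝ) (d : ℕ) : Prop :=
  IsExpander G b d ∧ ∀ v, (G.neighborSet v).ncard = d

/-- The vertices of the connected component `c` of `G`. -/
noncomputable def compVerts (G : SimpleGraph V) (c : G.ConnectedComponent) : Finset V :=
  Finset.univ.filter (fun v => G.connectedComponentMk v = c)

/-- The edges of the connected component `c` of `G`. -/
noncomputable def compEdges (G : SimpleGraph V) (c : G.ConnectedComponent) : Finset (Sym2 V) :=
  (edgeFinset' G).filter (fun e => ∀ v ∈ e, G.connectedComponentMk v = c)

/-- `c` is a largest connected component of `G`. -/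
def IsLargestComp (G : SimpleGraph V) (c : G.ConnectedComponent) : Prop :=
  ∀ c' : G.ConnectedComponent, (compVerts G c').card ≤ (compVerts G c).card

/-- The 2-core of the connected component `c` of `G` : the maximal subgraph of `G`
supported inside `c` all of whose vertices have degree at least 2. -/
noncomputable def twoCoreComp (G : SimpleGraph V) (c : G.ConnectedComponent) : SimpleGraph V :=
  sSup {H : SimpleGraph V | H ≤ G ∧ (∀ v ∈ H.support, G.connectedComponentMk v = c) ∧
    ∀ v ∈ H.support, 2 ≤ (H.neighborSet v).ncard}

/-- The event `A^R_{x,y}(H)`: the connected component of `y` in `H` with the edge `xy`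
removed (if present) has at least `R` vertices. -/
def eventA (H : SimpleGraph V) (R : ℕ) (x y : V) : Prop :=
  R ≤ (compVerts (H.deleteEdges {s(x, y)})
        ((H.deleteEdges {s(x, y)}).connectedComponentMk y)).card

/-- `E₁(H)`: edges `xy` of `H` such that `A^R_{x,y}` or `A^R_{y,x}` holds. -/
noncomputable def E1set (H : SimpleGraph V) (R : ℕ) : Finset (Sym2 V) :=
  (edgeFinset' H).filter (fun e => ∃ x y, e = s(x, y) ∧ (eventA H R x y ∨ eventA H R y x))

/-- `V₁(H)`: vertices `x` such that for some `y`, `xy ∈ E(H)` and `A^R_{x,y}` holds. -/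
noncomputable def V1set (H : SimpleGraph V) (R : ℕ) : Finset V :=
  Finset.univ.filter (fun x => ∃ y, H.Adj x y ∧ eventA H R x y)

/-- `E₂(H)`: edges `xy` of `H` such that both `A^R_{x,y}` and `A^R_{y,x}` hold. -/
noncomputable def E2set (H : SimpleGraph V) (R : ℕ) : Finset (Sym2 V) :=
  (edgeFinset' H).filter (fun e => ∃ x y, e = s(x, y) ∧ eventA H R x y ∧ eventA H R y x)

/-- `V₂(H)`: vertices incident to an edge of `E₂(H)`. -/
noncomputable def V2set (H : SimpleGraph V) (R : ℕ) : Finset V :=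
  Finset.univ.filter (fun x => ∃ e ∈ E2set H R, x ∈ e)

/-- `V̄₁(H)`: vertices `y` such that `A^R_{x,y}(H)` holds for some `x`. -/
noncomputable def Vbar1 (H : SimpleGraph V) (R : ℕ) : Finset V :=
  Finset.univ.filter (fun y => ∃ x, eventA H R x y)

/-- `S` is `k`-thick in `H`: a union of pairwise disjoint subsets, each of size at least
`k`, each inducing a connected subgraph of `H`. -/
def IsThick (H : SimpleGraph V) (k : ℕ) (S : Finset V) : Prop :=
  ∃ P : Finset (Finset V),
    (∀ T ∈ P, k ≤ T.card ∧ (H.induce (↑T : Set V)).Connected) ∧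
    (↑P : Set (Finset V)).PairwiseDisjoint id ∧ S = P.biUnion id

/-- `S` is a separator of `K`. -/
def IsSeparator {W : Type} [Fintype W] (K : SimpleGraph W) (S : Finset W) : Prop :=
  ∃ A B : Finset W, Disjoint A B ∧ Disjoint A S ∧ Disjoint B S ∧
    (∀ w, w ∈ A ∨ w ∈ B ∨ w ∈ S) ∧
    (∀ a ∈ A, ∀ b ∈ B, ¬ K.Adj a b) ∧
    3 * A.card ≤ 2 * Fintype.card W ∧ 3 * B.card ≤ 2 * Fintype.card W

/-!
Below the scale of the girth, clusters explored along geodesics are binomial branching processes,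
and the number of vertices whose cluster reaches distance `m` and whose degree lies in a given set
is a Lipschitz function of the retained edges. Bounded differences therefore put it within `η * n`
of its mean, the probability of the corresponding event in the `d`-regular tree cut at depth `m`.

To see that almost all surviving vertices lie in one component, write the percolation as the union
of independent percolations with parameters `p₁ < p` and `p₂`, with `p₁` close to `p`. In an
expander, two disjoint sets of at least `η * n` vertices are joined by linearly many edge-disjoint
paths of bounded length, so the second percolation fails to join them with probability exponentially
small in `n`. There are at most `2 ^ (n / K)` ways to split the components of size at least `K` of
the first percolation into two groups, so for `K` large a union bound over all of them still leaves
an exponentially small probability, and if no split goes unjoined then a single component contains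
all but few of those vertices. Their number is nearly that of the vertices surviving at `p`.
Conversely, every component above constant size consists of vertices surviving at `p`, so a largest
component agrees with the set of survivors up to few vertices and has the same degree distribution.
-/

section RandomSubset

variable {α ι : Type*} {p : ℝ} {E F : Finset α} {f g : Finset α → ℝ}

/-- The expectation of `f s` for the random subset `s` of `E` that contains each element of `E`
independently with probability `p`. -/
def subsetExp (p : ℝ) (E : Finset α) (f : Finset α → ℝ) : ℝ :=
  ∑ s ∈ E.powerset, p ^ s.card * (1 - p) ^ (E.card - s.card) * f s

/-- The probability that the random subset of `E` that contains each element of `E` independently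
with probability `p` satisfies `P`. -/
def subsetProb (p : ℝ) (E : Finset α) (P : Finset α → Prop) : ℝ :=
  subsetExp p E fun s => if P s then 1 else 0

lemma subsetExp_congr (h : ∀ s ⊆ E, f s = g s) : subsetExp p E f = subsetExp p E g :=
  Finset.sum_congr rfl fun s hs => by rw [h s (Finset.mem_powerset.1 hs)]

lemma subsetExp_mono (hp0 : 0 ≤ p) (hp1 : p ≤ 1) (h : ∀ s ⊆ E, f s ≤ g s) :
    subsetExp p E f ≤ subsetExp p E g :=
  Finset.sum_le_sum fun s hs => mul_le_mul_of_nonneg_left (h s (Finset.mem_powerset.1 hs))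
    (mul_nonneg (pow_nonneg hp0 _) (pow_nonneg (sub_nonneg.2 hp1) _))

@[simp]
lemma subsetExp_empty : subsetExp p ∅ f = f ∅ := by
  simp [subsetExp]

lemma subsetExp_add :
    subsetExp p E (fun s => f s + g s) = subsetExp p E f + subsetExp p E g := by
  simp [subsetExp, mul_add, Finset.sum_add_distrib]

lemma subsetExp_const_mul (a : ℝ) :
    subsetExp p E (fun s => a * f s) = a * subsetExp p E f := by
  simp only [subsetExp, Finset.mul_sum, mul_left_comm]

lemma subsetExp_neg : subsetExp p E (fun s => -f s) = -subsetExp p E f := by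
  simp [subsetExp]

lemma subsetExp_sub :
    subsetExp p E (fun s => f s - g s) = subsetExp p E f - subsetExp p E g := by
  simp [subsetExp, mul_sub]

lemma subsetExp_sum (I : Finset ι) (f : ι → Finset α → ℝ) :
    subsetExp p E (fun s => ∑ i ∈ I, f i s) = ∑ i ∈ I, subsetExp p E (f i) := by
  simp only [subsetExp, Finset.mul_sum]
  exact Finset.sum_comm

lemma subsetExp_pow_card (x : ℝ) :
    subsetExp p E (fun s => x ^ s.card) = (p * x + (1 - p)) ^ E.card := by
  rw [← Finset.sum_pow_mul_eq_add_pow]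
  exact Finset.sum_congr rfl fun s _ => by rw [mul_pow]; ring

@[simp]
lemma subsetExp_const (a : ℝ) : subsetExp p E (fun _ => a) = a := by
  simpa using (subsetExp_const_mul a).trans (congrArg (a * ·) (subsetExp_pow_card (p := p) 1))

lemma subsetExp_card (g : ℕ → ℝ) :
    subsetExp p E (fun s => g s.card) = ∑ j ∈ Finset.range (E.card + 1),
      E.card.choose j * p ^ j * (1 - p) ^ (E.card - j) * g j := by
  unfold subsetExp
  rw [Finset.sum_powerset_apply_card fun j => p ^ j * (1 - p) ^ (E.card - j) * g j]
  simp [mul_assoc]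

section DecidableEq

variable [DecidableEq α]

lemma subsetExp_insert {e : α} (he : e ∉ E) :
    subsetExp p (insert e E) f =
      p * subsetExp p E (fun s => f (insert e s)) + (1 - p) * subsetExp p E f := by
  unfold subsetExp
  rw [Finset.sum_powerset_insert he, add_comm, Finset.mul_sum, Finset.mul_sum]
  congr 1 <;> refine Finset.sum_congr rfl fun s hs => ?_ <;> rw [Finset.mem_powerset] at hs
  · rw [Finset.card_insert_of_notMem he, Finset.card_insert_of_notMem (fun h => he (hs h)),
      Nat.add_sub_add_right]
    ring
  · rw [Finset.card_insert_of_notMem he, Nat.sub_add_comm (Finset.card_le_card hs)]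
    ring

lemma subsetExp_union (h : Disjoint E F) :
    subsetExp p (E ∪ F) f = subsetExp p E fun s => subsetExp p F fun t => f (s ∪ t) := by
  induction E using Finset.induction_on generalizing f with
  | empty => simp
  | insert e E he ih =>
    rw [Finset.disjoint_insert_left] at h
    rw [Finset.insert_union, subsetExp_insert (by simp [he, h.1]), subsetExp_insert he,
      ih h.2, ih h.2]
    simp only [Finset.insert_union]

lemma subsetExp_inter (h : F ⊆ E) (f : Finset α → ℝ) :
    subsetExp p E (fun s => f (s ∩ F)) = subsetExp p F f := by
  conv_lhs => rw [← Finset.union_sdiff_of_subset h]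
  rw [subsetExp_union Finset.disjoint_sdiff]
  refine subsetExp_congr fun s hs => ?_
  rw [← subsetExp_const (p := p) (E := E \ F) (f s)]
  refine subsetExp_congr fun t ht => congrArg f ?_
  rw [Finset.union_inter_distrib_right, Finset.inter_eq_left.2 hs,
    Finset.disjoint_iff_inter_eq_empty.1 (Finset.disjoint_of_subset_left ht Finset.sdiff_disjoint),
    Finset.union_empty]

lemma subsetExp_subsetExp_union (p₁ p₂ : ℝ) (f : Finset α → ℝ) :
    subsetExp p₁ E (fun s => subsetExp p₂ E fun t => f (s ∪ t)) =
      subsetExp (1 - (1 - p₁) * (1 - p₂)) E f := by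
  induction E using Finset.induction_on generalizing f with
  | empty => simp
  | insert e E he ih =>
    simp only [subsetExp_insert he, Finset.insert_union, Finset.union_insert, Finset.insert_idem,
      subsetExp_add, subsetExp_const_mul]
    rw [ih f, ih fun s => f (insert e s)]
    ring

end DecidableEq

section Prob

variable {P Q : Finset α → Prop}

lemma subsetProb_mono (hp0 : 0 ≤ p) (hp1 : p ≤ 1) (h : ∀ s ⊆ E, P s → Q s) :
    subsetProb p E P ≤ subsetProb p E Q :=
  subsetExp_mono hp0 hp1 fun s hs => by
    by_cases hP : P s
    · simp [hP, h s hs hP]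
    · simp only [hP, if_false]
      split_ifs <;> norm_num

lemma subsetProb_le_one (hp0 : 0 ≤ p) (hp1 : p ≤ 1) : subsetProb p E P ≤ 1 :=
  (subsetExp_mono hp0 hp1 fun s _ => by split_ifs <;> norm_num).trans_eq (subsetExp_const 1)

lemma subsetProb_or_le (hp0 : 0 ≤ p) (hp1 : p ≤ 1) :
    subsetProb p E (fun s => P s ∨ Q s) ≤ subsetProb p E P + subsetProb p E Q := by
  unfold subsetProb
  rw [← subsetExp_add]
  refine subsetExp_mono hp0 hp1 fun s _ => ?_
  by_cases hP : P s <;> by_cases hQ : Q s <;> simp [hP, hQ]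

lemma subsetProb_not : subsetProb p E (fun s => ¬ P s) = 1 - subsetProb p E P := by
  unfold subsetProb
  rw [eq_sub_iff_add_eq, ← subsetExp_add, ← subsetExp_const (p := p) (E := E) 1]
  exact subsetExp_congr fun s _ => by by_cases hP : P s <;> simp [hP]

lemma subsetProb_exists_le {P : ι → Finset α → Prop} {I : Finset ι} {a : ℝ} (hp0 : 0 ≤ p)
    (hp1 : p ≤ 1) (h : ∀ i ∈ I, subsetProb p E (P i) ≤ a) :
    subsetProb p E (fun s => ∃ i ∈ I, P i s) ≤ I.card * a := by
  rw [← nsmul_eq_mul]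
  refine le_trans ?_ (Finset.sum_le_card_nsmul I _ a h)
  unfold subsetProb
  rw [← subsetExp_sum]
  refine subsetExp_mono hp0 hp1 fun s _ => ?_
  have hnonneg : ∀ j ∈ I, (0 : ℝ) ≤ if P j s then 1 else 0 := fun j _ => by split_ifs <;> norm_num
  split_ifs with hs
  · obtain ⟨i, hi, hPi⟩ := hs
    exact (if_pos hPi).symm.trans_le (Finset.single_le_sum hnonneg hi)
  · exact Finset.sum_nonneg hnonneg

section DecidableEq

variable [DecidableEq α]

lemma subsetProb_one_sub_mul_one_sub (p₁ p₂ : ℝ) (P : Finset α → Prop) :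
    subsetProb (1 - (1 - p₁) * (1 - p₂)) E P =
      subsetExp p₁ E fun s => subsetProb p₂ E fun t => P (s ∪ t) :=
  (subsetExp_subsetExp_union p₁ p₂ fun s => if P s then 1 else 0).symm

lemma subsetProb_le_of_union_imp {p₁ p₂ x : ℝ} {S : Finset α → Prop}
    {T : Finset α → Finset α → Prop} (hp₁0 : 0 ≤ p₁) (hp₁1 : p₁ ≤ 1) (hp₂0 : 0 ≤ p₂)
    (hp₂1 : p₂ ≤ 1) (hp : 1 - (1 - p₁) * (1 - p₂) = p) (hT : ∀ s, subsetProb p₂ E (T s) ≤ x)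
    (h : ∀ s ⊆ E, ∀ t ⊆ E, P (s ∪ t) → Q (s ∪ t) ∨ S s ∨ T s t) :
    subsetProb p E P ≤ subsetProb p E Q + (subsetProb p₁ E S + x) := by
  have hpoint : ∀ s ⊆ E, subsetProb p₂ E (fun t => P (s ∪ t)) ≤
      subsetProb p₂ E (fun t => Q (s ∪ t)) + ((if S s then 1 else 0) + x) := fun s hs => by
    have hconst : subsetProb p₂ E (fun _ => S s) = if S s then 1 else 0 := subsetExp_const _
    calc _ ≤ subsetProb p₂ E (fun t => Q (s ∪ t) ∨ S s ∨ T s t) :=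
          subsetProb_mono hp₂0 hp₂1 (h s hs)
      _ ≤ subsetProb p₂ E (fun t => Q (s ∪ t)) + subsetProb p₂ E (fun t => S s ∨ T s t) :=
          subsetProb_or_le hp₂0 hp₂1
      _ ≤ subsetProb p₂ E (fun t => Q (s ∪ t)) +
            (subsetProb p₂ E (fun _ => S s) + subsetProb p₂ E (T s)) := by
          gcongr
          exact subsetProb_or_le hp₂0 hp₂1
      _ ≤ _ := by
          rw [hconst]
          gcongr
          exact hT s
  calc subsetProb p E P
      ≤ subsetExp p₁ E fun s =>
          subsetProb p₂ E (fun t => Q (s ∪ t)) + ((if S s then 1 else 0) + x) := by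
        rw [← hp, subsetProb_one_sub_mul_one_sub]
        exact subsetExp_mono hp₁0 hp₁1 hpoint
    _ = subsetProb p E Q + (subsetProb p₁ E S + x) := by
        rw [subsetExp_add, subsetExp_add, subsetExp_const, ← subsetProb_one_sub_mul_one_sub, hp]
        rfl

end DecidableEq

lemma subsetProb_ne_self : subsetProb p E (· ≠ E) = 1 - p ^ E.card := by
  rw [subsetProb_not, sub_right_inj]
  simp [subsetProb, subsetExp]

lemma subsetProb_forall_not_subset_le {L : ℕ} {𝒬 : Finset (Finset α)} (hp0 : 0 ≤ p) (hp1 : p ≤ 1)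
    (hdisj : (𝒬 : Set (Finset α)).PairwiseDisjoint id) (hE : ∀ Q ∈ 𝒬, Q ⊆ E)
    (hL : ∀ Q ∈ 𝒬, Q.card ≤ L) :
    subsetProb p E (fun t => ∀ Q ∈ 𝒬, ¬ Q ⊆ t) ≤ (1 - p ^ L) ^ 𝒬.card := by
  induction 𝒬 using Finset.induction_on generalizing E with
  | empty => simpa using subsetProb_le_one hp0 hp1
  | insert Q 𝒬 hQ ih =>
    simp only [Finset.forall_mem_insert] at hE hL
    have hdisjQ : ∀ Q' ∈ 𝒬, Disjoint Q' Q := fun Q' hQ' =>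
      hdisj (by simp [hQ']) (by simp) fun h => hQ (h ▸ hQ')
    have h_rest := ih (E := E \ Q) (hdisj.subset (by simp))
      (fun Q' hQ' => Finset.subset_sdiff.2 ⟨hE.2 Q' hQ', hdisjQ Q' hQ'⟩) hL.2
    calc subsetProb p E (fun t => ∀ Q' ∈ insert Q 𝒬, ¬ Q' ⊆ t)
        = subsetExp p Q fun s => subsetProb p (E \ Q) fun t =>
            ∀ Q' ∈ insert Q 𝒬, ¬ Q' ⊆ s ∪ t := by
          conv_lhs => rw [← Finset.union_sdiff_of_subset hE.1]
          exact subsetExp_union Finset.disjoint_sdiff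
      _ ≤ (1 - p ^ L) ^ 𝒬.card * subsetProb p Q (· ≠ Q) := by
          rw [subsetProb, ← subsetExp_const_mul]
          refine subsetExp_mono hp0 hp1 fun s _ => ?_
          by_cases hs : s = Q
          · simp [hs, subsetProb]
          · simp only [ne_eq, hs, not_false_eq_true, if_true, mul_one]
            exact (subsetProb_mono hp0 hp1 fun t _ ht Q' hQ' hsub => ht Q'
              (Finset.mem_insert_of_mem hQ') (hsub.trans Finset.subset_union_right)).trans h_rest
      _ ≤ (1 - p ^ L) ^ 𝒬.card * (1 - p ^ L) := by
          rw [subsetProb_ne_self]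
          have hL0 : 0 ≤ 1 - p ^ L := sub_nonneg.2 (pow_le_one₀ hp0 hp1)
          gcongr _ * (1 - ?_)
          exact pow_le_pow_of_le_one hp0 hp1 hL.1
      _ = (1 - p ^ L) ^ (insert Q 𝒬).card := by rw [Finset.card_insert_of_notMem hQ, pow_succ]

end Prob

end RandomSubset

section BoundedDifferences

variable {α : Type*} {p : ℝ} {E : Finset α} {f : Finset α → ℝ} {c : ℝ}

lemma abs_subsetExp_sub_le {g : Finset α → ℝ} (hp0 : 0 ≤ p) (hp1 : p ≤ 1)
    (h : ∀ s ⊆ E, |f s - g s| ≤ c) : |subsetExp p E f - subsetExp p E g| ≤ c := by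
  rw [← subsetExp_sub, abs_le]
  exact ⟨(subsetExp_const (-c)).symm.trans_le
      (subsetExp_mono hp0 hp1 fun s hs => (abs_le.1 (h s hs)).1),
    (subsetExp_mono hp0 hp1 fun s hs => (abs_le.1 (h s hs)).2).trans_eq (subsetExp_const c)⟩

lemma bernoulli_exp_le (hp0 : 0 ≤ p) (hp1 : p ≤ 1) (u : ℝ) :
    p * Real.exp ((1 - p) * u) + (1 - p) * Real.exp (-(p * u)) ≤ Real.exp (u ^ 2 / 2) := by
  have hq0 := sub_nonneg.2 hp1
  set X := p * Real.exp ((1 - p) * u) + (1 - p) * Real.exp (-(p * u)) with hX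
  -- `Y` is the factor for an independent copy with the opposite sign; it is at least `1` by Jensen.
  set Y := p * Real.exp (-((1 - p) * u)) + (1 - p) * Real.exp (p * u) with hY
  have hY1 : 1 ≤ Y := by
    have h1 := mul_le_mul_of_nonneg_left (Real.add_one_le_exp (-((1 - p) * u))) hp0
    have h2 := mul_le_mul_of_nonneg_left (Real.add_one_le_exp (p * u)) hq0
    linarith
  have hXY : X * Y = 1 + 2 * (p * (1 - p)) * (Real.cosh u - 1) := by
    have hpos : Real.exp ((1 - p) * u) * Real.exp (p * u) = Real.exp u := by
      rw [← Real.exp_add]; ring_nf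
    have hneg : Real.exp (-((1 - p) * u)) * Real.exp (-(p * u)) = Real.exp (-u) := by
      rw [← Real.exp_add]; ring_nf
    have hone : ∀ t, Real.exp t * Real.exp (-t) = 1 := fun t => by rw [← Real.exp_add]; simp
    rw [Real.cosh_eq, ← hpos, ← hneg, hX, hY]
    linear_combination p ^ 2 * hone ((1 - p) * u) + (1 - p) ^ 2 * hone (p * u)
  calc X ≤ X * Y := le_mul_of_one_le_right (by positivity) hY1
    _ ≤ Real.cosh u := by rw [hXY]; nlinarith [Real.one_le_cosh u, sq_nonneg (2 * p - 1)]
    _ ≤ Real.exp (u ^ 2 / 2) := Real.cosh_le_exp_half_sq u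

lemma two_point_exp_le (hp0 : 0 ≤ p) (hp1 : p ≤ 1) {x y : ℝ} (h : |x - y| ≤ c) :
    p * Real.exp x + (1 - p) * Real.exp y ≤ Real.exp (p * x + (1 - p) * y + c ^ 2 / 2) := by
  set m := p * x + (1 - p) * y with hm
  have hx : Real.exp x = Real.exp m * Real.exp ((1 - p) * (x - y)) := by
    rw [← Real.exp_add, hm]; ring_nf
  have hy : Real.exp y = Real.exp m * Real.exp (-(p * (x - y))) := by
    rw [← Real.exp_add, hm]; ring_nf
  calc p * Real.exp x + (1 - p) * Real.exp y
      = Real.exp m * (p * Real.exp ((1 - p) * (x - y)) + (1 - p) * Real.exp (-(p * (x - y)))) := by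
        rw [hx, hy]; ring
    _ ≤ Real.exp m * Real.exp ((x - y) ^ 2 / 2) := by gcongr; exact bernoulli_exp_le hp0 hp1 _
    _ ≤ Real.exp m * Real.exp (c ^ 2 / 2) := by
        gcongr Real.exp m * Real.exp (?_ / 2)
        exact sq_le_sq' (abs_le.1 h).1 (abs_le.1 h).2
    _ = Real.exp (m + c ^ 2 / 2) := (Real.exp_add _ _).symm

variable [DecidableEq α]

lemma subsetExp_exp_le (hp0 : 0 ≤ p) (hp1 : p ≤ 1)
    (h : ∀ e ∈ E, ∀ s ⊆ E, |f (insert e s) - f s| ≤ c) :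
    subsetExp p E (fun s => Real.exp (f s)) ≤
      Real.exp (subsetExp p E f + c ^ 2 / 2 * E.card) := by
  induction E using Finset.induction_on generalizing f with
  | empty => simp
  | insert e E he ih =>
    have hsub : ∀ s ⊆ E, s ⊆ insert e E := fun s hs => hs.trans (Finset.subset_insert _ _)
    have h_without := ih (f := f) fun a ha s hs => h a (Finset.mem_insert_of_mem ha) s (hsub s hs)
    have h_with := ih (f := fun s => f (insert e s)) fun a ha s hs => by
      rw [Finset.insert_comm]
      exact h a (Finset.mem_insert_of_mem ha) _ (Finset.insert_subset_insert _ hs)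
    have hdiff := abs_subsetExp_sub_le hp0 hp1
      fun s hs => h e (Finset.mem_insert_self _ _) s (hsub s hs)
    have := sub_nonneg.2 hp1
    rw [subsetExp_insert he, subsetExp_insert he, Finset.card_insert_of_notMem he]
    set x := subsetExp p E fun s => f (insert e s)
    set y := subsetExp p E f
    calc p * subsetExp p E (fun s => Real.exp (f (insert e s))) +
          (1 - p) * subsetExp p E (fun s => Real.exp (f s))
        ≤ p * Real.exp (x + c ^ 2 / 2 * E.card) + (1 - p) * Real.exp (y + c ^ 2 / 2 * E.card) := by
          gcongr
      _ = (p * Real.exp x + (1 - p) * Real.exp y) * Real.exp (c ^ 2 / 2 * E.card) := by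
          rw [Real.exp_add, Real.exp_add]; ring
      _ ≤ Real.exp (p * x + (1 - p) * y + c ^ 2 / 2) * Real.exp (c ^ 2 / 2 * E.card) := by
          gcongr; exact two_point_exp_le hp0 hp1 hdiff
      _ = Real.exp (p * x + (1 - p) * y + c ^ 2 / 2 * (E.card + 1 : ℕ)) := by
          rw [← Real.exp_add]; push_cast; ring_nf

lemma subsetProb_le_sub_subsetExp_le (hp0 : 0 ≤ p) (hp1 : p ≤ 1)
    (h : ∀ e ∈ E, ∀ s ⊆ E, |f (insert e s) - f s| ≤ c) {a M : ℝ} (ha : 0 ≤ a) (hM : E.card ≤ M) :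
    subsetProb p E (fun s => a ≤ f s - subsetExp p E f) ≤
      Real.exp (-(a ^ 2 / (2 * c ^ 2 * M))) := by
  set l := a / (c ^ 2 * M) with hl
  have hM0 : 0 ≤ M := (Nat.cast_nonneg _).trans hM
  have hl0 : 0 ≤ l := by positivity
  have hmgf := subsetExp_exp_le (f := fun s => l * f s) (c := l * c) hp0 hp1 fun e he s hs => by
    rw [← mul_sub, abs_mul, abs_of_nonneg hl0]
    exact mul_le_mul_of_nonneg_left (h e he s hs) hl0
  rw [subsetExp_const_mul] at hmgf
  set m := subsetExp p E f
  calc subsetProb p E (fun s => a ≤ f s - m)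
      ≤ subsetExp p E (fun s => Real.exp (-(l * (a + m))) * Real.exp (l * f s)) := by
        refine subsetExp_mono hp0 hp1 fun s _ => ?_
        rw [← Real.exp_add]
        split_ifs with hs
        · exact Real.one_le_exp (by nlinarith)
        · positivity
    _ ≤ Real.exp (-(l * (a + m))) * Real.exp (l * m + (l * c) ^ 2 / 2 * M) := by
        rw [subsetExp_const_mul]
        gcongr
        exact hmgf.trans (by gcongr)
    _ = Real.exp (-(a ^ 2 / (2 * c ^ 2 * M))) := by
        rw [← Real.exp_add]
        congr 1
        rcases eq_or_ne (c ^ 2 * M) 0 with h0 | h0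
        · simp [hl, h0, mul_assoc]
        · obtain ⟨hc, hM⟩ := mul_ne_zero_iff.1 h0
          have := pow_ne_zero_iff two_ne_zero |>.1 hc
          rw [hl]; field_simp; ring

lemma subsetProb_le_abs_sub_subsetExp_le (hp0 : 0 ≤ p) (hp1 : p ≤ 1)
    (h : ∀ e ∈ E, ∀ s ⊆ E, |f (insert e s) - f s| ≤ c) {a M : ℝ} (ha : 0 ≤ a) (hM : E.card ≤ M) :
    subsetProb p E (fun s => a ≤ |f s - subsetExp p E f|) ≤
      2 * Real.exp (-(a ^ 2 / (2 * c ^ 2 * M))) := by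
  have hneg := subsetProb_le_sub_subsetExp_le (f := fun s => -f s) (c := c) hp0 hp1
    (fun e he s hs => by rw [← abs_neg]; convert h e he s hs using 2; ring) ha hM
  rw [subsetExp_neg] at hneg
  rw [two_mul]
  refine le_trans (subsetProb_mono hp0 hp1 fun s _ hs => ?_)
    ((subsetProb_or_le hp0 hp1).trans
      (add_le_add (subsetProb_le_sub_subsetExp_le hp0 hp1 h ha hM) hneg))
  exact (le_abs.1 hs).imp_right fun h => h.trans_eq (by ring)

end BoundedDifferences

section Geodesics

variable {W : Type*} {G : SimpleGraph W} {g i d : ℕ} {x u u' v : W}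

lemma path_eq_of_length_add_lt_egirth (hg : (g : ℕ∞) ≤ G.egirth) {P Q : G.Walk u v}
    (hP : P.IsPath) (hQ : Q.IsPath) (h : P.length + Q.length < g) : P = Q := by
  by_contra hne
  obtain ⟨w, -, -, C, hC, hle⟩ := hP.exists_isCycle_length_le_add_of_ne hQ hne
  have hgC : g ≤ C.length := by exact_mod_cast hg.trans (SimpleGraph.egirth_le_length hC)
  omega

lemma exists_isPath_concat (hc : G.Connected) (h : G.Adj u v) (hle : G.dist x u ≤ G.dist x v) :
    ∃ P : G.Walk x u, (P.concat h).IsPath ∧ P.length = G.dist x u := by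
  obtain ⟨P, hP, hl⟩ := hc.exists_path_of_dist x u
  refine ⟨P, hP.concat (fun hv => ?_) h, hl⟩
  have hlt := SimpleGraph.Walk.length_takeUntil_lt_length hv h.ne'
  have hdist := SimpleGraph.dist_le (P.takeUntil v hv)
  omega

lemma parent_unique (hc : G.Connected) (hg : (g : ℕ∞) ≤ G.egirth) (h : G.Adj u v)
    (h' : G.Adj u' v) (hu : G.dist x u = i) (hu' : G.dist x u' = i) (hv : G.dist x v = i + 1)
    (hi : 2 * i + 2 < g) : u = u' := by
  obtain ⟨P, hP, hl⟩ := exists_isPath_concat hc h (by omega : G.dist x u ≤ G.dist x v)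
  obtain ⟨P', hP', hl'⟩ := exists_isPath_concat hc h' (by omega : G.dist x u' ≤ G.dist x v)
  have heq := path_eq_of_length_add_lt_egirth hg hP hP' (by
    rw [SimpleGraph.Walk.length_concat, SimpleGraph.Walk.length_concat]; omega)
  exact (SimpleGraph.Walk.concat_inj heq).1

lemma dist_ne_dist_of_adj (hc : G.Connected) (hg : (g : ℕ∞) ≤ G.egirth) (h : G.Adj u v)
    (hi : 2 * G.dist x u + 1 < g) : G.dist x u ≠ G.dist x v := by
  intro he
  obtain ⟨P, hP, hl⟩ := exists_isPath_concat hc h he.le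
  obtain ⟨Q, hQ, hl'⟩ := hc.exists_path_of_dist x v
  have heq := path_eq_of_length_add_lt_egirth hg hP hQ (by
    rw [SimpleGraph.Walk.length_concat]; omega)
  have hlen := congrArg SimpleGraph.Walk.length heq
  rw [SimpleGraph.Walk.length_concat] at hlen
  omega

lemma exists_parent (hc : G.Connected) (hv : G.dist x v = i + 1) :
    ∃ u, G.Adj u v ∧ G.dist x u = i := by
  obtain ⟨P, hl⟩ := hc.exists_walk_length_eq_dist x v
  have hnil : ¬ P.Nil := by
    rw [← SimpleGraph.Walk.length_eq_zero_iff]; omega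
  have hadj := P.adj_penultimate hnil
  have hdrop := SimpleGraph.dist_le P.dropLast
  have hlen := congrArg SimpleGraph.Walk.length (P.concat_dropLast hadj)
  rw [SimpleGraph.Walk.length_concat] at hlen
  have hdiff := hadj.diff_dist_adj (u := x)
  exact ⟨_, hadj, by omega⟩

variable [Fintype W]

/-- The neighbours of `v` that are one step further away from the root `x`. -/
def children (G : SimpleGraph W) (x v : W) : Finset W :=
  Finset.univ.filter fun w => G.Adj v w ∧ G.dist x w = G.dist x v + 1

lemma mem_children {w : W} : w ∈ children G x v ↔ G.Adj v w ∧ G.dist x w = G.dist x v + 1 := by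
  simp [children]

lemma card_children_self (x : W) : (children G x x).card = (G.neighborSet x).ncard := by
  rw [← Set.ncard_coe_finset]
  congr 1
  ext w
  simp [mem_children]

lemma card_children_add_one (hc : G.Connected) (hg : (g : ℕ∞) ≤ G.egirth) (h0 : x ≠ v)
    (hi : 2 * G.dist x v + 1 < g) :
    (children G x v).card + 1 = (G.neighborSet v).ncard := by
  obtain ⟨i, hv⟩ := Nat.exists_eq_succ_of_ne_zero (hc.pos_dist_of_ne h0).ne'
  obtain ⟨u, huv, hu⟩ := exists_parent hc hv
  have hnotMem : u ∉ (children G x v : Set W) := by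
    simp only [Finset.mem_coe, mem_children, not_and]; omega
  rw [← Set.ncard_coe_finset, ← Set.ncard_insert_of_notMem hnotMem]
  congr 1
  ext w
  simp only [Set.mem_insert_iff, Finset.mem_coe, mem_children, SimpleGraph.mem_neighborSet]
  constructor
  · rintro (rfl | h)
    exacts [huv.symm, h.1]
  · intro h
    have hdiff := h.diff_dist_adj (u := x)
    have hne := dist_ne_dist_of_adj hc hg h hi
    by_cases hw : G.dist x w = G.dist x v + 1
    · exact Or.inr ⟨h, hw⟩
    · exact Or.inl (parent_unique hc hg h.symm huv (by omega) hu hv (by omega))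

lemma card_ball_le (hc : G.Connected) (hd : ∀ v, (G.neighborSet v).ncard ≤ d) (x : W) (m : ℕ) :
    (Finset.univ.filter fun v => G.dist x v ≤ m).card ≤ (d + 1) ^ m := by
  induction m with
  | zero => simp [hc.dist_eq_zero_iff, Finset.filter_eq]
  | succ m ih =>
    have hsub : (Finset.univ.filter fun v => G.dist x v ≤ m + 1) ⊆
        (Finset.univ.filter fun v => G.dist x v ≤ m).biUnion
          fun u => insert u (G.neighborSet u).toFinset := by
      intro v hv
      simp only [Finset.mem_filter, Finset.mem_univ, true_and, Finset.mem_biUnion,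
        Finset.mem_insert, Set.mem_toFinset, SimpleGraph.mem_neighborSet] at hv ⊢
      rcases hv.lt_or_eq with hlt | heq
      · exact ⟨v, by omega, Or.inl rfl⟩
      · obtain ⟨u, huv, hu⟩ := exists_parent hc heq
        exact ⟨u, hu.le, Or.inr huv⟩
    have hstar : ∀ u, (insert u (G.neighborSet u).toFinset).card ≤ d + 1 := fun u =>
      (Finset.card_insert_le _ _).trans
        (Nat.succ_le_succ ((Set.ncard_eq_toFinset_card' _).symm.trans_le (hd u)))
    refine (Finset.card_le_card hsub).trans
      ((Finset.card_biUnion_le_card_mul _ _ (d + 1) fun u _ => hstar u).trans ?_)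
    rw [pow_succ]
    exact Nat.mul_le_mul_right _ ih

end Geodesics

section Front

variable {W : Type} {s t : Finset (Sym2 W)}

/-- The graph with edge set `s`, where diagonal elements of `s` are discarded. -/
abbrev graphOf (s : Finset (Sym2 W)) : SimpleGraph W :=
  SimpleGraph.fromEdgeSet s

lemma graphOf_mono (h : s ⊆ t) : graphOf s ≤ graphOf t :=
  SimpleGraph.fromEdgeSet_mono h

variable [Fintype W] {G : SimpleGraph W} {g i j m d : ℕ} {x v w : W}

@[simp]
lemma mem_edgeFinset' {e : Sym2 W} : e ∈ edgeFinset' G ↔ e ∈ G.edgeSet := by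
  simp [edgeFinset']

@[simp]
lemma mem_compVerts {H : SimpleGraph W} {c : H.ConnectedComponent} :
    v ∈ compVerts H c ↔ H.connectedComponentMk v = c := by
  simp [compVerts]

/-- The vertices at distance `i` from `x` in `G` that are joined to `x` by a geodesic of `G` all of
whose edges lie in `s`. As long as `G` has no short cycles, these are the generations of the
exploration of the cluster of `x` in `s`. -/
def front (G : SimpleGraph W) (x : W) (s : Finset (Sym2 W)) : ℕ → Finset W
  | 0 => {x}
  | i + 1 => Finset.univ.filter fun w => G.dist x w = i + 1 ∧ ∃ v ∈ front G x s i, s(v, w) ∈ s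

@[simp]
lemma mem_front_zero : w ∈ front G x s 0 ↔ w = x := by
  simp [front]

lemma mem_front_succ : w ∈ front G x s (i + 1) ↔
    G.dist x w = i + 1 ∧ ∃ v ∈ front G x s i, s(v, w) ∈ s := by
  simp [front]

lemma dist_of_mem_front (h : w ∈ front G x s i) : G.dist x w = i := by
  cases i with
  | zero => simp [mem_front_zero.1 h]
  | succ i => exact (mem_front_succ.1 h).1

lemma front_nonempty_of_le (hij : i ≤ j) (h : (front G x s j).Nonempty) :
    (front G x s i).Nonempty := by
  induction j, hij using Nat.le_induction with
  | base => exact h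
  | succ j _ ih =>
    obtain ⟨w, hw⟩ := h
    obtain ⟨-, v, hv, -⟩ := mem_front_succ.1 hw
    exact ih ⟨v, hv⟩

lemma reachable_of_mem_front (h : w ∈ front G x s i) : (graphOf s).Reachable x w := by
  induction i generalizing w with
  | zero => rw [mem_front_zero.1 h]
  | succ i ih =>
    obtain ⟨hw, v, hv, hvw⟩ := mem_front_succ.1 h
    have hne : v ≠ w := fun he => by
      have := dist_of_mem_front (he ▸ hv); omega
    exact (ih hv).trans ((SimpleGraph.fromEdgeSet_adj _).2 ⟨hvw, hne⟩).reachable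

lemma lt_card_compVerts_of_front_nonempty (h : (front G x s m).Nonempty) :
    m < (compVerts (graphOf s) ((graphOf s).connectedComponentMk x)).card := by
  have hne : ∀ i : Fin (m + 1), ∃ v, v ∈ front G x s i :=
    fun i => front_nonempty_of_le (Nat.lt_succ_iff.1 i.2) h
  choose v hv using hne
  rw [← Nat.succ_le_iff, Nat.succ_eq_add_one, ← Fintype.card_fin (m + 1), ← Finset.card_univ]
  refine Finset.card_le_card_of_injOn v (fun i _ => ?_) (fun i _ j _ hij => ?_)
  · rw [Finset.mem_coe, mem_compVerts, SimpleGraph.ConnectedComponent.eq]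
    exact (reachable_of_mem_front (hv i)).symm
  · exact Fin.ext ((dist_of_mem_front (hv i)).symm.trans (dist_of_mem_front (hij ▸ hv j)))

lemma exists_mem_front_of_reachable (hc : G.Connected) (hg : (g : ℕ∞) ≤ G.egirth)
    (hs : s ⊆ edgeFinset' G) (hm : 2 * m < g) (h : front G x s m = ∅)
    (hr : (graphOf s).Reachable x w) : ∃ i < m, w ∈ front G x s i := by
  rw [SimpleGraph.reachable_iff_reflTransGen] at hr
  induction hr with
  | refl =>
    refine ⟨0, Nat.pos_of_ne_zero fun h0 => ?_, mem_front_zero.2 rfl⟩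
    subst h0
    simp [front] at h
  | @tail v w _ hvw ih =>
    obtain ⟨i, hi, hv⟩ := ih
    rw [SimpleGraph.fromEdgeSet_adj] at hvw
    have hdv := dist_of_mem_front hv
    have hadj : G.Adj v w := mem_edgeFinset'.1 (hs hvw.1)
    have hdiff := hadj.diff_dist_adj (u := x)
    have hne := dist_ne_dist_of_adj hc hg (x := x) hadj (by omega)
    by_cases hw : G.dist x w = i + 1
    · have hmem : w ∈ front G x s (i + 1) := mem_front_succ.2 ⟨hw, v, hv, hvw.1⟩
      refine ⟨i + 1, lt_of_le_of_ne hi fun him => ?_, hmem⟩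
      simp [him, h] at hmem
    · obtain ⟨j, rfl⟩ : ∃ j, i = j + 1 := ⟨i - 1, by omega⟩
      obtain ⟨-, u, hu, huv⟩ := mem_front_succ.1 hv
      have hparent : u = w := parent_unique hc hg (mem_edgeFinset'.1 (hs huv)) hadj.symm
        (dist_of_mem_front hu) (by omega) hdv (by omega)
      exact ⟨j, by omega, hparent ▸ hu⟩

lemma card_compVerts_le_of_front_eq_empty (hc : G.Connected) (hg : (g : ℕ∞) ≤ G.egirth)
    (hs : s ⊆ edgeFinset' G) (hd : ∀ v, (G.neighborSet v).ncard ≤ d) (hm : 2 * m < g)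
    (h : front G x s m = ∅) :
    (compVerts (graphOf s) ((graphOf s).connectedComponentMk x)).card ≤ (d + 1) ^ m := by
  refine le_trans (Finset.card_le_card fun w hw => ?_) (card_ball_le hc hd x m)
  rw [mem_compVerts, SimpleGraph.ConnectedComponent.eq] at hw
  obtain ⟨i, hi, hwi⟩ := exists_mem_front_of_reachable hc hg hs hm h hw.symm
  simp only [Finset.mem_filter, Finset.mem_univ, true_and, dist_of_mem_front hwi, hi.le]

lemma front_congr (h : ∀ v w, G.dist x w = G.dist x v + 1 → G.dist x w ≤ m →
    (s(v, w) ∈ s ↔ s(v, w) ∈ t)) (hi : i ≤ m) : front G x s i = front G x t i := by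
  induction i with
  | zero => rfl
  | succ i ih =>
    ext w
    rw [mem_front_succ, mem_front_succ, ih (by omega)]
    refine and_congr_right fun hw => exists_congr fun v => and_congr_right fun hv => ?_
    exact h v w (by rw [hw, dist_of_mem_front hv]) (by omega)

lemma front_insert_of_lt_dist [DecidableEq W] {u : W} (hm : m < G.dist x u) (hi : i ≤ m) :
    front G x (insert s(u, v) s) i = front G x s i := by
  refine front_congr (fun a b hab hb => ?_) hi
  rw [Finset.mem_insert, or_iff_right]
  intro he
  rcases Sym2.eq_iff.1 he with ⟨rfl, -⟩ | ⟨-, rfl⟩ <;> omega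

lemma ncard_neighborSet_graphOf (hs : s ⊆ edgeFinset' G) :
    ((graphOf s).neighborSet x).ncard = (front G x s 1).card := by
  rw [← Set.ncard_coe_finset]
  congr 1
  ext w
  simp only [SimpleGraph.mem_neighborSet, SimpleGraph.fromEdgeSet_adj, Finset.mem_coe,
    mem_front_succ, mem_front_zero, exists_eq_left, zero_add, SimpleGraph.dist_eq_one_iff_adj]
  have hadj : s(x, w) ∈ s → G.Adj x w := fun h => mem_edgeFinset'.1 (hs h)
  exact ⟨fun h => ⟨hadj h.1, h.1⟩, fun h => ⟨h.2, h.1.ne⟩⟩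

/-- The edges of `G` from `F` to the sphere of radius `i + 1` around `x`: for `F = front G x s i`,
the edges whose states determine the next front. -/
def outEdges (G : SimpleGraph W) (x : W) (i : ℕ) (F : Finset W) : Finset (Sym2 W) :=
  (edgeFinset' G).filter fun e => ∃ v ∈ F, ∃ w, G.dist x w = i + 1 ∧ e = s(v, w)

lemma mem_outEdges {F : Finset W} {e : Sym2 W} : e ∈ outEdges G x i F ↔
    e ∈ G.edgeSet ∧ ∃ v ∈ F, ∃ w, G.dist x w = i + 1 ∧ e = s(v, w) := by
  simp [outEdges]

lemma outEdges_subset {F : Finset W} : outEdges G x i F ⊆ edgeFinset' G :=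
  Finset.filter_subset _ _

lemma card_outEdges {D : ℕ} {F : Finset W} (hF : ∀ v ∈ F, G.dist x v = i)
    (hD : ∀ v ∈ F, (children G x v).card = D) : (outEdges G x i F).card = F.card * D := by
  have hunion : outEdges G x i F =
      F.biUnion fun v => (children G x v).image fun w => s(v, w) := by
    ext e
    simp only [mem_outEdges, Finset.mem_biUnion, Finset.mem_image, mem_children]
    constructor
    · rintro ⟨he, v, hv, w, hw, rfl⟩
      exact ⟨v, hv, w, ⟨he, by rw [hF v hv, hw]⟩, rfl⟩
    · rintro ⟨v, hv, w, ⟨h, hw⟩, rfl⟩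
      exact ⟨h, v, hv, w, by rw [hw, hF v hv], rfl⟩
  rw [hunion, Finset.card_biUnion]
  · rw [Finset.sum_const_nat]
    intro v hv
    rw [Finset.card_image_of_injective _ fun a b hab => Sym2.congr_right.1 hab, hD v hv]
  · intro v hv v' hv' hne
    rw [Function.onFun, Finset.disjoint_left]
    simp only [Finset.mem_image, mem_children]
    rintro e ⟨w, ⟨-, hw⟩, rfl⟩ ⟨w', ⟨-, _⟩, he⟩
    rcases Sym2.eq_iff.1 he with ⟨h, -⟩ | ⟨h, -⟩
    · exact hne h.symm
    · have hdv := hF v hv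
      have hdv' := hF v' hv'
      rw [h] at hdv'
      omega

lemma card_front_succ [DecidableEq W] (hc : G.Connected) (hg : (g : ℕ∞) ≤ G.egirth)
    (hs : s ⊆ edgeFinset' G) (hi : 2 * i + 2 < g) :
    (front G x s (i + 1)).card = (s ∩ outEdges G x i (front G x s i)).card := by
  choose! f hf hfs using fun w (hw : w ∈ front G x s (i + 1)) => (mem_front_succ.1 hw).2
  refine Finset.card_nbij (fun w => s(f w, w)) (fun w hw => ?_) (fun w hw w' hw' h => ?_)
    (fun e he => ?_)
  · rw [Finset.mem_coe, Finset.mem_inter, mem_outEdges]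
    exact ⟨hfs w hw, mem_edgeFinset'.1 (hs (hfs w hw)), f w, hf w hw, w, dist_of_mem_front hw, rfl⟩
  · rcases Sym2.eq_iff.1 h with ⟨-, h⟩ | ⟨h, -⟩
    · exact h
    · have hd := dist_of_mem_front (hf w hw)
      have hd' := dist_of_mem_front hw'
      rw [h] at hd
      omega
  · rw [Finset.mem_coe, Finset.mem_inter, mem_outEdges] at he
    obtain ⟨hes, heG, v, hv, w, hw, rfl⟩ := he
    have hwf : w ∈ front G x s (i + 1) := mem_front_succ.2 ⟨hw, v, hv, hes⟩
    have hfw : f w = v := parent_unique hc hg (mem_edgeFinset'.1 (hs (hfs w hwf))) heG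
      (dist_of_mem_front (hf w hwf)) (dist_of_mem_front hv) hw hi
    exact ⟨w, hwf, congrArg (fun a => s(a, w)) hfw⟩

lemma front_union_of_subset_outEdges [DecidableEq W]
    (ht : t ⊆ outEdges G x i (Finset.univ.filter fun v => G.dist x v = i)) (hj : j ≤ i) :
    front G x (s ∪ t) j = front G x s j := by
  refine front_congr (m := i) (fun a b hab hb => ?_) hj
  rw [Finset.mem_union, or_iff_left]
  intro he
  obtain ⟨-, v, hv, w, hw, he⟩ := mem_outEdges.1 (ht he)
  rw [Finset.mem_filter] at hv
  rcases Sym2.eq_iff.1 he with ⟨rfl, rfl⟩ | ⟨rfl, rfl⟩ <;> omega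

end Front

section Survivors

/-- The generating function of the binomial law with parameters `d - 1` and `p`, the offspring law
of the branching process that describes clusters in a `d`-regular tree. -/
def offspring (p : ℝ) (d : ℕ) (r : ℝ) : ℝ := (1 - p + p * r) ^ (d - 1)

/-- The probability that the branching process with generating function `offspring p d` is extinct
by generation `j`. -/
def extinctionProb (p : ℝ) (d j : ℕ) : ℝ := (offspring p d)^[j] 0

/-- The probability that the root of a `d`-regular tree has a number of open edges in `A` and that
one of the subtrees behind them survives, when each of them dies out with probability `r`. -/
def survivalDensity (p : ℝ) (d : ℕ) (r : ℝ) (A : Set ℕ) : ℝ :=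
  ∑ k ∈ Finset.range (d + 1) with k ∈ A, d.choose k * p ^ k * (1 - p) ^ (d - k) * (1 - r ^ k)

variable {W : Type} [Fintype W] {G : SimpleGraph W} {g i j m d : ℕ} {p : ℝ}

/-- The vertices `x` that are joined in `s` to distance `m` by a geodesic of `G` and whose degree
in `s` belongs to `A`. -/
def survivors (G : SimpleGraph W) (m : ℕ) (A : Set ℕ) (s : Finset (Sym2 W)) : Finset W :=
  Finset.univ.filter fun x => (front G x s m).Nonempty ∧ (front G x s 1).card ∈ A

lemma subsetExp_mul_pow_card_front_succ (hc : G.Connected) (hg : (g : ℕ∞) ≤ G.egirth)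
    (hd : ∀ v, (G.neighborSet v).ncard = d) (r : ℝ) (x : W) (φ : ℕ → ℝ) (h1 : 1 ≤ i)
    (hi : 2 * i + 2 < g) :
    subsetExp p (edgeFinset' G)
        (fun s => φ (front G x s 1).card * r ^ (front G x s (i + 1)).card) =
      subsetExp p (edgeFinset' G)
        (fun s => φ (front G x s 1).card * offspring p d r ^ (front G x s i).card) := by
  classical
  -- Condition on all edges except those between the spheres of radius `i` and `i + 1`.
  set L := outEdges G x i (Finset.univ.filter fun v => G.dist x v = i)
  have hsub : L ⊆ edgeFinset' G := outEdges_subset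
  rw [← Finset.sdiff_union_of_subset hsub, subsetExp_union Finset.sdiff_disjoint,
    subsetExp_union Finset.sdiff_disjoint]
  refine subsetExp_congr fun s hs => ?_
  set C := outEdges G x i (front G x s i) with hC
  have hCL : C ⊆ L := fun e he => by
    obtain ⟨he, v, hv, hw⟩ := mem_outEdges.1 he
    exact mem_outEdges.2 ⟨he, v, by simp [dist_of_mem_front hv], hw⟩
  have hCcard : C.card = (front G x s i).card * (d - 1) := by
    refine card_outEdges (fun v hv => dist_of_mem_front hv) fun v hv => ?_
    have hdist := dist_of_mem_front hv
    have hne : x ≠ v := fun h => by simp [h] at hdist; omega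
    have hcard := card_children_add_one hc hg hne (by omega)
    rw [hd] at hcard
    omega
  have hsC : s ∩ C = ∅ := Finset.disjoint_iff_inter_eq_empty.1
    ((Finset.disjoint_of_subset_left hs Finset.sdiff_disjoint).mono_right hCL)
  have hright : ∀ t ⊆ L,
      φ (front G x (s ∪ t) 1).card * offspring p d r ^ (front G x (s ∪ t) i).card =
        φ (front G x s 1).card * offspring p d r ^ (front G x s i).card := fun t ht => by
    rw [front_union_of_subset_outEdges ht h1, front_union_of_subset_outEdges ht le_rfl]
  have hleft : ∀ t ⊆ L, φ (front G x (s ∪ t) 1).card * r ^ (front G x (s ∪ t) (i + 1)).card =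
      φ (front G x s 1).card * r ^ (t ∩ C).card := fun t ht => by
    rw [front_union_of_subset_outEdges ht h1, card_front_succ hc hg
      (Finset.union_subset (hs.trans Finset.sdiff_subset) (ht.trans hsub)) hi,
      front_union_of_subset_outEdges ht le_rfl, ← hC, Finset.union_inter_distrib_right, hsC,
      Finset.empty_union]
  rw [subsetExp_congr hright, subsetExp_const, subsetExp_congr hleft, subsetExp_const_mul,
    subsetExp_inter hCL (fun s => r ^ s.card), subsetExp_pow_card, hCcard, offspring, ← pow_mul,
    mul_comm (d - 1), add_comm]

lemma subsetExp_mul_pow_card_front (hc : G.Connected) (hg : (g : ℕ∞) ≤ G.egirth)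
    (hd : ∀ v, (G.neighborSet v).ncard = d) (r : ℝ) (x : W) (φ : ℕ → ℝ) (hj : 2 * j + 2 < g) :
    subsetExp p (edgeFinset' G)
        (fun s => φ (front G x s 1).card * r ^ (front G x s (j + 1)).card) =
      subsetExp p (edgeFinset' G)
        (fun s => φ (front G x s 1).card * ((offspring p d)^[j] r) ^ (front G x s 1).card) := by
  induction j generalizing r with
  | zero => rfl
  | succ j ih =>
    rw [subsetExp_mul_pow_card_front_succ hc hg hd r x φ (by omega) (by omega), ih _ (by omega)]
    rfl

lemma subsetExp_card_front_one (hc : G.Connected) (hg : (g : ℕ∞) ≤ G.egirth) (h2 : 2 < g)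
    (hd : ∀ v, (G.neighborSet v).ncard = d) (x : W) (φ : ℕ → ℝ) :
    subsetExp p (edgeFinset' G) (fun s => φ (front G x s 1).card) =
      ∑ k ∈ Finset.range (d + 1), d.choose k * p ^ k * (1 - p) ^ (d - k) * φ k := by
  classical
  have hcard : (outEdges G x 0 {x}).card = d := by
    rw [card_outEdges (D := d) (by simp) fun v hv => ?_, Finset.card_singleton, one_mul]
    rw [Finset.mem_singleton.1 hv, card_children_self, hd]
  rw [← hcard, ← subsetExp_card, ← subsetExp_inter (outEdges_subset (G := G))]
  exact subsetExp_congr fun s hs => by rw [card_front_succ hc hg hs h2, front]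

lemma subsetExp_card_survivors (hc : G.Connected) (hg : (g : ℕ∞) ≤ G.egirth)
    (hd : ∀ v, (G.neighborSet v).ncard = d) (A : Set ℕ) (hj : 2 * j + 2 < g) :
    subsetExp p (edgeFinset' G) (fun s => ((survivors G (j + 1) A s).card : ℝ)) =
      Fintype.card W * survivalDensity p d (extinctionProb p d j) A := by
  set φ : ℕ → ℝ := A.indicator 1
  have hcard : ∀ s, ((survivors G (j + 1) A s).card : ℝ) =
      ∑ x, φ (front G x s 1).card * (1 - 0 ^ (front G x s (j + 1)).card) := fun s => by
    rw [survivors, ← Finset.sum_boole]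
    refine Finset.sum_congr rfl fun x _ => ?_
    rcases (front G x s (j + 1)).eq_empty_or_nonempty with hempty | hne
    · simp [hempty]
    · simp [φ, hne, hne.card_pos.ne', Set.indicator_apply]
  have hvertex : ∀ x, subsetExp p (edgeFinset' G)
      (fun s => φ (front G x s 1).card * (1 - 0 ^ (front G x s (j + 1)).card)) =
      survivalDensity p d (extinctionProb p d j) A := fun x => by
    simp only [mul_sub, mul_one]
    rw [subsetExp_sub, subsetExp_mul_pow_card_front hc hg hd 0 x φ hj, ← subsetExp_sub,
      ← extinctionProb,
      subsetExp_card_front_one hc hg (by omega) hd x fun k => φ k - φ k * extinctionProb p d j ^ k,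
      survivalDensity, Finset.sum_filter]
    refine Finset.sum_congr rfl fun k _ => ?_
    by_cases hk : k ∈ A <;> simp [φ, hk]
  simp only [hcard, subsetExp_sum, hvertex, Finset.sum_const, Finset.card_univ, nsmul_eq_mul]

lemma abs_card_filter_sub_card_filter_le {ι : Type*} {I : Finset ι} {P Q R : ι → Prop}
    [DecidablePred P] [DecidablePred Q] [DecidablePred R]
    (h : ∀ i ∈ I, ¬ R i → (P i ↔ Q i)) :
    |((I.filter P).card : ℝ) - (I.filter Q).card| ≤ (I.filter R).card := by
  classical
  have hle : ∀ (P Q : ι → Prop) [DecidablePred P] [DecidablePred Q],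
      (∀ i ∈ I, ¬ R i → (P i ↔ Q i)) →
      (I.filter P).card ≤ (I.filter Q).card + (I.filter R).card := fun P Q _ _ h => by
    refine (Finset.card_le_card fun i hi => ?_).trans (Finset.card_union_le _ _)
    simp only [Finset.mem_union, Finset.mem_filter] at hi ⊢
    by_cases hR : R i
    · exact Or.inr ⟨hi.1, hR⟩
    · exact Or.inl ⟨hi.1, (h i hi.1 hR).1 hi.2⟩
  rw [abs_sub_le_iff, sub_le_iff_le_add', sub_le_iff_le_add']
  exact ⟨by exact_mod_cast hle P Q h,
    by exact_mod_cast hle Q P fun i hi hR => (h i hi hR).symm⟩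

lemma abs_card_survivors_insert_sub_le [DecidableEq W] (hc : G.Connected)
    (hd : ∀ v, (G.neighborSet v).ncard ≤ d) (A : Set ℕ) (hm : 1 ≤ m) (e : Sym2 W)
    (s : Finset (Sym2 W)) :
    |((survivors G m A (insert e s)).card : ℝ) - (survivors G m A s).card| ≤ (d + 1) ^ m := by
  induction e using Sym2.ind with
  | _ u v =>
  have hball : ((Finset.univ.filter fun x => G.dist u x ≤ m).card : ℝ) ≤ (d + 1) ^ m := by
    exact_mod_cast card_ball_le hc hd u m
  unfold survivors
  refine (abs_card_filter_sub_card_filter_le fun x _ hx => ?_).trans hball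
  rw [not_le, SimpleGraph.dist_comm] at hx
  rw [front_insert_of_lt_dist hx hm, front_insert_of_lt_dist hx le_rfl]

lemma card_edgeFinset'_le (hd : ∀ v, (G.neighborSet v).ncard ≤ d) :
    (edgeFinset' G).card ≤ Fintype.card W * d := by
  have hsub : edgeFinset' G ⊆ Finset.univ.biUnion
      fun v => (G.neighborSet v).toFinset.image fun w => s(v, w) := by
    intro e he
    induction e using Sym2.ind with
    | _ v w =>
    simp only [Finset.mem_biUnion, Finset.mem_univ, true_and, Finset.mem_image, Set.mem_toFinset]
    exact ⟨v, w, mem_edgeFinset'.1 he, rfl⟩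
  refine (Finset.card_le_card hsub).trans ?_
  rw [← Finset.card_univ]
  refine Finset.card_biUnion_le_card_mul _ _ _ fun v _ => Finset.card_image_le.trans ?_
  exact (Set.ncard_eq_toFinset_card' _).symm.trans_le (hd v)

lemma subsetProb_le_abs_card_survivors_sub_le (hc : G.Connected) (hg : (g : ℕ∞) ≤ G.egirth)
    (hd : ∀ v, (G.neighborSet v).ncard = d) (hp0 : 0 ≤ p) (hp1 : p ≤ 1) (A : Set ℕ)
    (hj : 2 * j + 2 < g) {η : ℝ} (hη : 0 ≤ η) :
    subsetProb p (edgeFinset' G) (fun s => η * Fintype.card W ≤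
        |(survivors G (j + 1) A s).card -
          Fintype.card W * survivalDensity p d (extinctionProb p d j) A|) ≤
      2 * Real.exp (-(η ^ 2 / (2 * ((d + 1) ^ (j + 1)) ^ 2 * d) * Fintype.card W)) := by
  classical
  have := hc.nonempty
  have hM : ((edgeFinset' G).card : ℝ) ≤ Fintype.card W * d := by
    exact_mod_cast card_edgeFinset'_le fun v => (hd v).le
  rw [← subsetExp_card_survivors hc hg hd A hj]
  refine (subsetProb_le_abs_sub_subsetExp_le hp0 hp1 (fun e _ s _ =>
    abs_card_survivors_insert_sub_le hc (fun v => (hd v).le) A (by omega) e s)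
    (by positivity) hM).trans_eq ?_
  congr 3
  have hn : (Fintype.card W : ℝ) ≠ 0 := Nat.cast_ne_zero.2 Fintype.card_ne_zero
  rw [mul_pow, sq (Fintype.card W : ℝ), ← mul_assoc, ← mul_assoc, mul_right_comm _ _ (d : ℝ),
    mul_div_mul_right _ _ hn, mul_div_right_comm]

end Survivors

section Connectors

section Joins

variable {W : Type*} {H K : SimpleGraph W} {A B : Finset W}

/-- Some vertex of `A` and some vertex of `B` lie in the same component of `H`. -/
def Joins (H : SimpleGraph W) (A B : Finset W) : Prop :=
  ∃ a ∈ A, ∃ c ∈ B, H.Reachable a c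

lemma Joins.mono (h : Joins H A B) (hHK : H ≤ K) : Joins K A B :=
  let ⟨a, ha, c, hc, hr⟩ := h
  ⟨a, ha, c, hc, hr.mono hHK⟩

lemma not_joins_bot (h : Disjoint A B) : ¬ Joins ⊥ A B := by
  rintro ⟨a, ha, c, hc, hr⟩
  exact Finset.disjoint_left.1 h ha (SimpleGraph.reachable_bot.1 hr ▸ hc)

end Joins

variable {W : Type} [Fintype W] {G : SimpleGraph W} {F : Finset (Sym2 W)} {A B S : Finset W}
  {b η : ℝ} {d i j L : ℕ}

/-- The edges of `F` that join `S` to its complement. -/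
def cutEdges (F : Finset (Sym2 W)) (S : Finset W) : Finset (Sym2 W) :=
  F.filter fun e => ∃ x ∈ S, ∃ y, y ∉ S ∧ e = s(x, y)

@[simp]
lemma mem_cutEdges {e : Sym2 W} :
    e ∈ cutEdges F S ↔ e ∈ F ∧ ∃ x ∈ S, ∃ y, y ∉ S ∧ e = s(x, y) :=
  Finset.mem_filter

lemma cutEdges_subset : cutEdges F S ⊆ F := Finset.filter_subset _ _

/-- The vertices that can be reached from `A` along at most `i` edges of `F`. -/
def thicken (F : Finset (Sym2 W)) (A : Finset W) (i : ℕ) : Finset W :=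
  Finset.univ.filter fun v => ∃ Q ⊆ F, Q.card ≤ i ∧ ∃ a ∈ A, (graphOf Q).Reachable a v

lemma subset_thicken : A ⊆ thicken F A i := fun v hv =>
  Finset.mem_filter.2
    ⟨Finset.mem_univ v, ∅, Finset.empty_subset F, Nat.zero_le i, v, hv, .refl v⟩

lemma thicken_mono (h : i ≤ j) : thicken F A i ⊆ thicken F A j :=
  Finset.monotone_filter_right _ fun _ _ ⟨Q, hQ, hc, hr⟩ => ⟨Q, hQ, hc.trans h, hr⟩

lemma mem_thicken_succ {v w : W} (hv : v ∈ thicken F A i) (hvw : s(v, w) ∈ F) :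
    w ∈ thicken F A (i + 1) := by
  classical
  obtain ⟨-, Q, hQ, hc, a, ha, hr⟩ := Finset.mem_filter.1 hv
  refine Finset.mem_filter.2 ⟨Finset.mem_univ w, insert s(v, w) Q, Finset.insert_subset hvw hQ,
    (Finset.card_insert_le _ _).trans (by omega), a, ha,
    (hr.mono (graphOf_mono (Finset.subset_insert _ _))).trans ?_⟩
  by_cases h : v = w
  · rw [h]
  · exact SimpleGraph.Adj.reachable ((SimpleGraph.fromEdgeSet_adj _).2 ⟨by simp, h⟩)

lemma disjoint_cutEdges_thicken (h : i < j) :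
    Disjoint (cutEdges F (thicken F A i)) (cutEdges F (thicken F A j)) := by
  rw [Finset.disjoint_left]
  intro e he he'
  obtain ⟨heF, x, hx, y, -, rfl⟩ := mem_cutEdges.1 he
  obtain ⟨-, _, _, _, hy', he⟩ := mem_cutEdges.1 he'
  rcases Sym2.eq_iff.1 he with ⟨-, rfl⟩ | ⟨rfl, -⟩
  · exact hy' (thicken_mono h (mem_thicken_succ hx heF))
  · exact hy' (thicken_mono h.le hx)

lemma disjoint_thicken_of_forall_not_joins (h : ∀ Q ⊆ F, Q.card ≤ i → ¬ Joins (graphOf Q) A B) :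
    Disjoint (thicken F A i) B := by
  rw [Finset.disjoint_left]
  intro v hv hvB
  obtain ⟨-, Q, hQ, hc, a, ha, hr⟩ := Finset.mem_filter.1 hv
  exact h Q hQ hc ⟨a, ha, v, hvB, hr⟩

variable [DecidableEq W]

lemma cutCard_compl : cutCard G Sᶜ = cutCard G S := by
  unfold cutCard
  congr 1
  refine Finset.filter_congr fun e _ => ?_
  simp only [Finset.mem_compl, not_not]
  constructor <;> rintro ⟨x, hx, y, hy, rfl⟩ <;> exact ⟨y, hy, x, hx, Sym2.eq_swap⟩

lemma cutCard_le_card_cutEdges_add :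
    cutCard G S ≤ (cutEdges F S).card + (edgeFinset' G \ F).card := by
  refine (Finset.card_le_card fun e he => ?_).trans (Finset.card_union_le _ _)
  obtain ⟨heG, hcut⟩ := Finset.mem_filter.1 he
  by_cases heF : e ∈ F
  · exact Finset.mem_union_left _ (mem_cutEdges.2 ⟨heF, hcut⟩)
  · exact Finset.mem_union_right _ (Finset.mem_sdiff.2 ⟨heG, heF⟩)

lemma IsExpander.mul_le_cutCard (hG : IsExpander G b d) (hb : 0 ≤ b) {N : ℝ}
    (h : N ≤ S.card) (hcompl : N ≤ Sᶜ.card) : b * N ≤ cutCard G S := by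
  have hadd : (S.card : ℝ) + Sᶜ.card = Fintype.card W := by
    exact_mod_cast Finset.card_add_card_compl S
  by_cases hS : (S.card : ℝ) ≤ Fintype.card W / 2
  · exact (mul_le_mul_of_nonneg_left h hb).trans (hG.2 S hS)
  · rw [← cutCard_compl]
    exact (mul_le_mul_of_nonneg_left hcompl hb).trans (hG.2 Sᶜ (by linarith))

lemma IsExpander.connected [Nonempty W] (hG : IsExpander G b d) (hb : 0 < b) : G.Connected := by
  rw [SimpleGraph.connected_iff]
  refine ⟨fun u v => ?_, inferInstance⟩
  by_contra huv
  set S := compVerts G (G.connectedComponentMk u)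
  have hu : (1 : ℝ) ≤ S.card := by
    exact_mod_cast Finset.card_pos.2 ⟨u, by simp [S]⟩
  have hv : (1 : ℝ) ≤ Sᶜ.card := by
    exact_mod_cast Finset.card_pos.2 ⟨v, by simpa [S] using fun h => huv h.symm⟩
  have hcut : cutCard G S = 0 := by
    rw [cutCard, Finset.card_eq_zero, Finset.filter_eq_empty_iff]
    rintro e he ⟨x, hx, y, hy, rfl⟩
    have hadj : G.Adj x y := mem_edgeFinset'.1 he
    simp only [S, mem_compVerts, SimpleGraph.ConnectedComponent.eq] at hx hy
    exact hy (hadj.symm.reachable.trans hx)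
  have := hG.mul_le_cutCard hb.le hu hv
  rw [hcut, Nat.cast_zero] at this
  linarith

/-- Otherwise the cuts around the sets `thicken F A i`, `i < L`, would be pairwise disjoint and
large, hence together contain more edges than `G` has. -/
lemma IsExpander.exists_short_connector [Nonempty W] (hG : IsExpander G b d) (hb : 0 ≤ b)
    (hL : 2 * d < L * (b * η)) (hA : η * Fintype.card W ≤ A.card)
    (hB : η * Fintype.card W ≤ B.card) (hF : F ⊆ edgeFinset' G)
    (hcard : ((edgeFinset' G \ F).card : ℝ) ≤ b * η / 2 * Fintype.card W) :
    ∃ Q ⊆ F, Q.card ≤ L ∧ Joins (graphOf Q) A B := by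
  by_contra! hno
  set X : ℕ → Finset (Sym2 W) := fun i => cutEdges F (thicken F A i)
  have hX : ∀ i ∈ Finset.range L, b * η / 2 * Fintype.card W ≤ (X i).card := fun i hi => by
    have hdisj := disjoint_thicken_of_forall_not_joins (i := i) fun Q hQ hc =>
      hno Q hQ (hc.trans (Finset.mem_range.1 hi).le)
    have hcut : b * (η * Fintype.card W) ≤ cutCard G (thicken F A i) := by
      refine hG.mul_le_cutCard hb (hA.trans ?_) (hB.trans ?_) <;>
        refine Nat.cast_le.2 (Finset.card_le_card ?_)
      · exact subset_thicken
      · exact Finset.subset_compl_iff_disjoint_left.2 hdisj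
    have hle : (cutCard G (thicken F A i) : ℝ) ≤ (X i).card + (edgeFinset' G \ F).card := by
      exact_mod_cast cutCard_le_card_cutEdges_add
    linarith
  have hXdisj : Set.PairwiseDisjoint (Finset.range L : Set ℕ) X := fun i _ j _ hij =>
    (lt_or_gt_of_ne hij).elim disjoint_cutEdges_thicken fun h => (disjoint_cutEdges_thicken h).symm
  have hupper : ∑ i ∈ Finset.range L, ((X i).card : ℝ) ≤ Fintype.card W * d := by
    rw [← Nat.cast_sum, ← Finset.card_biUnion hXdisj]
    refine mod_cast (Finset.card_le_card ?_).trans (card_edgeFinset'_le hG.1)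
    exact Finset.biUnion_subset.2 fun i _ => cutEdges_subset.trans hF
  have hlower : L * (b * η / 2 * Fintype.card W) ≤ ∑ i ∈ Finset.range L, ((X i).card : ℝ) := by
    simpa using Finset.card_nsmul_le_sum _ _ _ hX
  have hW : (0 : ℝ) < Fintype.card W := by exact_mod_cast Fintype.card_pos
  nlinarith

/-- A maximal family of disjoint connectors is large: a smaller one misses so few edges that
another connector can be found outside it. -/
lemma IsExpander.exists_disjoint_connectors (hG : IsExpander G b d) (hb : 0 ≤ b)
    (hL : 2 * d < L * (b * η)) (hAB : Disjoint A B) (hA : η * Fintype.card W ≤ A.card)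
    (hB : η * Fintype.card W ≤ B.card) :
    ∃ 𝒬 : Finset (Finset (Sym2 W)), (𝒬 : Set (Finset (Sym2 W))).PairwiseDisjoint id ∧
      (∀ Q ∈ 𝒬, Q ⊆ edgeFinset' G ∧ Q.card ≤ L ∧ Joins (graphOf Q) A B) ∧
      b * η / (2 * L) * Fintype.card W ≤ 𝒬.card := by
  obtain ⟨𝒬, -, ⟨hdisj, hmem⟩, hmax⟩ := Finite.exists_le_maximal (a := ∅)
    (p := fun 𝒬 : Finset (Finset (Sym2 W)) => (𝒬 : Set (Finset (Sym2 W))).PairwiseDisjoint id ∧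
      ∀ Q ∈ 𝒬, Q ⊆ edgeFinset' G ∧ Q.card ≤ L ∧ Joins (graphOf Q) A B) (by simp)
  refine ⟨𝒬, hdisj, hmem, ?_⟩
  by_contra! hlt
  have hL0 : (L : ℝ) ≠ 0 := by
    rintro h
    rw [h, zero_mul] at hL
    exact hL.not_ge (by positivity)
  have : Nonempty W := by
    by_contra hW
    rw [not_nonempty_iff] at hW
    simp [(Nat.cast_nonneg (α := ℝ) 𝒬.card).not_gt] at hlt
  set F := edgeFinset' G \ 𝒬.biUnion id
  have hcard : ((edgeFinset' G \ F).card : ℝ) ≤ b * η / 2 * Fintype.card W := by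
    calc ((edgeFinset' G \ F).card : ℝ)
        ≤ 𝒬.card * L := by
          rw [sdiff_sdiff_right_self]
          exact_mod_cast (Finset.card_le_card inf_le_right).trans
            (Finset.card_biUnion_le_card_mul 𝒬 id L fun Q hQ => (hmem Q hQ).2.1)
      _ ≤ b * η / (2 * L) * Fintype.card W * L := by gcongr
      _ = b * η / 2 * Fintype.card W := by field_simp
  obtain ⟨Q, hQF, hQL, hQ⟩ := hG.exists_short_connector hb hL hA hB Finset.sdiff_subset hcard
  have hQdisj : ∀ Q' ∈ 𝒬, Disjoint Q Q' := fun Q' hQ' =>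
    Finset.disjoint_of_subset_left hQF (Finset.sdiff_disjoint.mono_right
      (Finset.subset_biUnion_of_mem id hQ'))
  have hQmem : Q ∈ 𝒬 := by
    refine hmax ⟨?_, ?_⟩ (Finset.subset_insert Q 𝒬) (Finset.mem_insert_self Q 𝒬)
    · rw [Finset.coe_insert]
      exact hdisj.insert fun Q' hQ' _ => hQdisj Q' hQ'
    · exact (Finset.forall_mem_insert _ _ _).2 ⟨⟨hQF.trans Finset.sdiff_subset, hQL, hQ⟩, hmem⟩
  rw [Finset.disjoint_self_iff_empty Q |>.1 (hQdisj Q hQmem), graphOf, Finset.coe_empty,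
    SimpleGraph.fromEdgeSet_empty] at hQ
  exact not_joins_bot hAB hQ

lemma IsExpander.subsetProb_not_joins_le (hG : IsExpander G b d) (hb : 0 ≤ b) {p : ℝ}
    (hp0 : 0 ≤ p) (hp1 : p ≤ 1) (hL : 2 * d < L * (b * η)) (hAB : Disjoint A B)
    (hA : η * Fintype.card W ≤ A.card) (hB : η * Fintype.card W ≤ B.card) :
    subsetProb p (edgeFinset' G) (fun t => ¬ Joins (graphOf t) A B) ≤
      Real.exp (-(p ^ L * (b * η / (2 * L)) * Fintype.card W)) := by
  obtain ⟨𝒬, hdisj, hmem, hcard⟩ := hG.exists_disjoint_connectors hb hL hAB hA hB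
  calc subsetProb p (edgeFinset' G) (fun t => ¬ Joins (graphOf t) A B)
      ≤ subsetProb p (edgeFinset' G) (fun t => ∀ Q ∈ 𝒬, ¬ Q ⊆ t) :=
        subsetProb_mono hp0 hp1 fun t _ ht Q hQ hQt =>
          ht ((hmem Q hQ).2.2.mono (graphOf_mono hQt))
    _ ≤ (1 - p ^ L) ^ 𝒬.card := subsetProb_forall_not_subset_le hp0 hp1 hdisj
        (fun Q hQ => (hmem Q hQ).1) fun Q hQ => (hmem Q hQ).2.1
    _ ≤ Real.exp (-p ^ L) ^ 𝒬.card := by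
        gcongr
        · exact sub_nonneg.2 (pow_le_one₀ hp0 hp1)
        · linarith [Real.add_one_le_exp (-p ^ L)]
    _ = Real.exp (-(p ^ L * 𝒬.card)) := by rw [← Real.exp_nat_mul]; ring_nf
    _ ≤ Real.exp (-(p ^ L * (b * η / (2 * L)) * Fintype.card W)) := by
        rw [mul_assoc]
        gcongr

end Connectors

section Sprinkling

lemma exists_large_fiber {α β : Type*} [DecidableEq β] (f : α → β) {U : Finset α} {N : ℝ}
    (hN : 0 < N) (hU : N ≤ U.card)
    (h : ∀ S : Finset β, N ≤ (U.filter (f · ∈ S)).card → (U.filter (f · ∉ S)).card < N) :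
    ∃ c, U.card - 2 * N ≤ (U.filter (f · = c)).card := by
  obtain ⟨S, hS, hmin⟩ := Finset.exists_min_image
    ((U.image f).powerset.filter fun S => N ≤ (U.filter (f · ∈ S)).card) Finset.card
    ⟨U.image f, Finset.mem_filter.2 ⟨Finset.mem_powerset_self _, by
      rwa [Finset.filter_true_of_mem fun v => Finset.mem_image_of_mem f]⟩⟩
  simp only [Finset.mem_filter, Finset.mem_powerset] at hS hmin
  obtain ⟨c, hc⟩ : S.Nonempty := by
    by_contra hempty
    rw [Finset.not_nonempty_iff_eq_empty] at hempty
    simp [hempty, hN.not_ge] at hS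
  refine ⟨c, ?_⟩
  have herase : ((U.filter (f · ∈ S.erase c)).card : ℝ) < N := by
    by_contra! hle
    exact (Finset.card_erase_lt_of_mem hc).not_ge
      (hmin (S.erase c) ⟨(Finset.erase_subset _ _).trans hS.1, hle⟩)
  have hcompl := h S hS.2
  have hcover : U.card ≤ (U.filter (f · ∉ S)).card + (U.filter (f · ∈ S.erase c)).card +
      (U.filter (f · = c)).card := by
    classical
    refine (Finset.card_le_card fun v hv => ?_).trans
      ((Finset.card_union_le _ _).trans (Nat.add_le_add_right (Finset.card_union_le _ _) _))
    simp only [Finset.mem_union, Finset.mem_filter, Finset.mem_erase, hv, true_and]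
    tauto
  have : (U.card : ℝ) ≤ (U.filter (f · ∉ S)).card + (U.filter (f · ∈ S.erase c)).card +
      (U.filter (f · = c)).card := by exact_mod_cast hcover
  linarith

variable {W : Type} [Fintype W] {G H H₁ H₂ : SimpleGraph W} {K : ℕ}

/-- The vertices of `H` whose connected component has at least `K` vertices. -/
def bigVerts (H : SimpleGraph W) (K : ℕ) : Finset W :=
  Finset.univ.filter fun v => K ≤ (compVerts H (H.connectedComponentMk v)).card

lemma mul_card_image_bigVerts_le :
    K * ((bigVerts H K).image H.connectedComponentMk).card ≤ Fintype.card W := by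
  refine (Finset.mul_card_image_le_card _ _ fun c hc => ?_).trans (Finset.card_le_univ _)
  obtain ⟨v, hv, rfl⟩ := Finset.mem_image.1 hc
  have hK := (Finset.mem_filter.1 hv).2
  refine hK.trans (Finset.card_le_card fun w hw => ?_)
  rw [mem_compVerts] at hw
  exact Finset.mem_filter.2 ⟨Finset.mem_filter.2 ⟨Finset.mem_univ w, by rwa [hw]⟩, hw⟩

lemma exists_card_sub_le_card_compVerts [Nonempty W] (h₁ : H₁ ≤ H) (h₂ : H₂ ≤ H) {U : Finset W}
    {N : ℝ} (hN : 0 < N)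
    (h : ∀ 𝒮 ⊆ U.image H₁.connectedComponentMk,
      N ≤ (U.filter (H₁.connectedComponentMk · ∈ 𝒮)).card →
      N ≤ (U.filter (H₁.connectedComponentMk · ∉ 𝒮)).card →
      Joins H₂ (U.filter (H₁.connectedComponentMk · ∈ 𝒮))
        (U.filter (H₁.connectedComponentMk · ∉ 𝒮))) :
    ∃ c, U.card - 2 * N ≤ (compVerts H c).card := by
  rcases lt_or_ge (U.card : ℝ) N with hU | hU
  · refine ⟨H.connectedComponentMk (Classical.arbitrary W), ?_⟩
    exact (by linarith : (U.card : ℝ) - 2 * N ≤ 0).trans (Nat.cast_nonneg _)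
  obtain ⟨c, hc⟩ := exists_large_fiber H.connectedComponentMk hN hU fun 𝒮 hA => by
    by_contra! hB
    set 𝒮₁ := (U.filter (H.connectedComponentMk · ∈ 𝒮)).image H₁.connectedComponentMk
    have hiff : ∀ v ∈ U, H₁.connectedComponentMk v ∈ 𝒮₁ ↔ H.connectedComponentMk v ∈ 𝒮 := by
      refine fun v hv => ⟨fun hm => ?_, fun hm =>
        Finset.mem_image_of_mem _ (Finset.mem_filter.2 ⟨hv, hm⟩)⟩
      obtain ⟨u, hu, huv⟩ := Finset.mem_image.1 hm
      rw [← SimpleGraph.ConnectedComponent.eq.2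
        ((SimpleGraph.ConnectedComponent.eq.1 huv).mono h₁)]
      exact (Finset.mem_filter.1 hu).2
    have hjoin := h 𝒮₁ (Finset.image_subset_image (Finset.filter_subset _ _))
    rw [Finset.filter_congr hiff, Finset.filter_congr fun v hv => not_congr (hiff v hv)] at hjoin
    obtain ⟨a, ha, c, hc, hr⟩ := hjoin hA hB
    exact (Finset.mem_filter.1 hc).2
      (SimpleGraph.ConnectedComponent.eq.2 (hr.mono h₂) ▸ (Finset.mem_filter.1 ha).2)
  refine ⟨c, hc.trans ?_⟩
  exact_mod_cast Finset.card_le_card (Finset.filter_subset_filter _ (Finset.subset_univ U))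

/-- Sprinkling: a union bound over the at most `2 ^ (n / K) ≤ exp (n / K)` ways to divide the big
components of `graphOf s` into two groups. -/
lemma IsExpander.subsetProb_not_exists_large_comp_le [DecidableEq W] [Nonempty W] {b η p : ℝ}
    {d L : ℕ} (hG : IsExpander G b d) (hb : 0 ≤ b) (hp0 : 0 ≤ p) (hp1 : p ≤ 1) (hη : 0 < η)
    (hL : 2 * d < L * (b * η)) (hK : 0 < K) (s : Finset (Sym2 W)) :
    subsetProb p (edgeFinset' G) (fun t => ¬ ∃ c, ((bigVerts (graphOf s) K).card : ℝ) -
        2 * (η * Fintype.card W) ≤ (compVerts (graphOf (s ∪ t)) c).card) ≤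
      Real.exp ((1 / K - p ^ L * (b * η / (2 * L))) * Fintype.card W) := by
  set U := bigVerts (graphOf s) K
  set 𝒞 := U.image (graphOf s).connectedComponentMk
  set N := η * Fintype.card W
  set x := Real.exp (-(p ^ L * (b * η / (2 * L)) * Fintype.card W))
  let A (𝒮 : Finset (graphOf s).ConnectedComponent) :=
    U.filter ((graphOf s).connectedComponentMk · ∈ 𝒮)
  let B (𝒮 : Finset (graphOf s).ConnectedComponent) :=
    U.filter ((graphOf s).connectedComponentMk · ∉ 𝒮)
  have hsplit : ∀ 𝒮 ∈ 𝒞.powerset, subsetProb p (edgeFinset' G) (fun t =>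
      (N ≤ (A 𝒮).card ∧ N ≤ (B 𝒮).card) ∧ ¬ Joins (graphOf t) (A 𝒮) (B 𝒮)) ≤ x := fun 𝒮 _ => by
    by_cases h : N ≤ (A 𝒮).card ∧ N ≤ (B 𝒮).card
    · simp only [h, true_and]
      exact hG.subsetProb_not_joins_le hb hp0 hp1 hL (Finset.disjoint_filter_filter_not _ _ _)
        h.1 h.2
    · simpa [h, subsetProb] using (Real.exp_pos _).le
  have hcard : ((𝒞.powerset.card : ℕ) : ℝ) ≤ Real.exp (1 / K * Fintype.card W) := by
    rw [Finset.card_powerset, Nat.cast_pow, Nat.cast_ofNat]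
    calc (2 : ℝ) ^ 𝒞.card ≤ Real.exp 1 ^ 𝒞.card := by
          gcongr
          linarith [Real.add_one_le_exp (1 : ℝ)]
      _ = Real.exp 𝒞.card := by rw [← Real.exp_nat_mul, mul_one]
      _ ≤ Real.exp (1 / K * Fintype.card W) := by
          rw [Real.exp_le_exp, one_div, inv_mul_eq_div, le_div_iff₀' (by exact_mod_cast hK)]
          exact_mod_cast mul_card_image_bigVerts_le
  calc _ ≤ subsetProb p (edgeFinset' G) (fun t => ∃ 𝒮 ∈ 𝒞.powerset,
        (N ≤ (A 𝒮).card ∧ N ≤ (B 𝒮).card) ∧ ¬ Joins (graphOf t) (A 𝒮) (B 𝒮)) := by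
        refine subsetProb_mono hp0 hp1 fun t _ ht => ?_
        by_contra! hno
        exact ht (exists_card_sub_le_card_compVerts (graphOf_mono Finset.subset_union_left)
          (graphOf_mono Finset.subset_union_right) (mul_pos hη (by exact_mod_cast Fintype.card_pos))
          fun 𝒮 h𝒮 hA hB => hno 𝒮 (Finset.mem_powerset.2 h𝒮) ⟨hA, hB⟩)
    _ ≤ 𝒞.powerset.card * x := subsetProb_exists_le hp0 hp1 hsplit
    _ ≤ Real.exp (1 / K * Fintype.card W) * x := by gcongr
    _ = Real.exp ((1 / K - p ^ L * (b * η / (2 * L))) * Fintype.card W) := by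
        rw [← Real.exp_add]; ring_nf

end Sprinkling

section Extinction

open Filter Topology

variable {p q r x y η κ : ℝ} {d j k : ℕ} {A : Set ℕ}

lemma continuous_offspring : Continuous fun z : ℝ × ℝ => offspring z.1 d z.2 := by
  unfold offspring
  fun_prop

lemma offspring_nonneg (hp0 : 0 ≤ p) (hp1 : p ≤ 1) (hx : 0 ≤ x) : 0 ≤ offspring p d x :=
  pow_nonneg (by nlinarith) _

lemma offspring_le_offspring (hp0 : 0 ≤ p) (hp1 : p ≤ 1) (hx : 0 ≤ x) (hxy : x ≤ y) :
    offspring p d x ≤ offspring p d y :=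
  pow_le_pow_left₀ (by nlinarith) (by nlinarith) _

lemma extinctionProb_succ : extinctionProb p d (j + 1) = offspring p d (extinctionProb p d j) :=
  Function.iterate_succ_apply' ..

lemma extinctionProb_nonneg (hp0 : 0 ≤ p) (hp1 : p ≤ 1) : 0 ≤ extinctionProb p d j := by
  induction j with
  | zero => exact le_rfl
  | succ j ih => rw [extinctionProb_succ]; exact offspring_nonneg hp0 hp1 ih

lemma extinctionProb_le (hp0 : 0 ≤ p) (hp1 : p ≤ 1) (hx : 0 ≤ x) (h : offspring p d x ≤ x) :
    extinctionProb p d j ≤ x := by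
  induction j with
  | zero => exact hx
  | succ j ih =>
    rw [extinctionProb_succ]
    exact (offspring_le_offspring hp0 hp1 (extinctionProb_nonneg hp0 hp1) ih).trans h

lemma monotone_extinctionProb (hp0 : 0 ≤ p) (hp1 : p ≤ 1) : Monotone (extinctionProb p d) := by
  refine monotone_nat_of_le_succ fun j => ?_
  induction j with
  | zero => exact extinctionProb_nonneg hp0 hp1
  | succ j ih =>
    rw [extinctionProb_succ, extinctionProb_succ]
    exact offspring_le_offspring hp0 hp1 (extinctionProb_nonneg hp0 hp1) ih

lemma offspring_lt_self (hd : 3 ≤ d) (hp0 : 0 < p) (hp1 : p ≤ 1) (hq0 : 0 ≤ q)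
    (hq : offspring p d q = q) (hqr : q < r) (hr : r < 1) : offspring p d r < r := by
  -- By strict convexity, `offspring p d` lies below its chord between the fixed points `q` and `1`.
  have hq1 : 0 < 1 - q := by linarith
  have hbase : 1 - p + p * q ∈ Set.Ici (0 : ℝ) := Set.mem_Ici.2 (by nlinarith)
  have hchord := (strictConvexOn_pow (show 2 ≤ d - 1 by omega)).2 hbase
    (Set.mem_Ici.2 zero_le_one) (by nlinarith) (div_pos (sub_pos.2 hr) hq1)
    (div_pos (sub_pos.2 hqr) hq1) (by field_simp; ring)
  simp only [smul_eq_mul, one_pow, mul_one] at hchord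
  calc offspring p d r
      = ((1 - r) / (1 - q) * (1 - p + p * q) + (r - q) / (1 - q)) ^ (d - 1) := by
        rw [offspring]; congr 1; field_simp; ring
    _ < (1 - r) / (1 - q) * offspring p d q + (r - q) / (1 - q) := hchord
    _ = r := by rw [hq]; field_simp; ring

lemma tendsto_extinctionProb (hd : 3 ≤ d) (hp0 : 0 < p) (hp1 : p ≤ 1) (hq0 : 0 ≤ q) (hq1 : q < 1)
    (hq : offspring p d q = q) : Tendsto (extinctionProb p d) atTop (𝓝 q) := by
  have hle : ∀ j, extinctionProb p d j ≤ q := fun j => extinctionProb_le hp0.le hp1 hq0 hq.le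
  obtain ⟨l, hl⟩ : ∃ l, Tendsto (extinctionProb p d) atTop (𝓝 l) :=
    ⟨_, tendsto_atTop_ciSup (monotone_extinctionProb hp0.le hp1)
      ⟨q, Set.forall_mem_range.2 hle⟩⟩
  have hfix : offspring p d l = l := isFixedPt_of_tendsto_iterate hl
    (continuous_offspring.comp (Continuous.prodMk_right p)).continuousAt
  have hl0 : 0 ≤ l := ge_of_tendsto' hl fun j => extinctionProb_nonneg hp0.le hp1
  rcases (le_of_tendsto' hl hle).eq_or_lt with rfl | hlq
  · exact hl
  · exact absurd hq (offspring_lt_self hd hp0 hp1 hl0 hfix hlq hq1).ne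

lemma continuous_survivalDensity : Continuous fun z : ℝ × ℝ => survivalDensity z.1 d z.2 A := by
  unfold survivalDensity
  fun_prop

lemma survivalDensity_singleton (hk : k ≤ d) :
    survivalDensity p d r {k} = d.choose k * p ^ k * (1 - p) ^ (d - k) * (1 - r ^ k) := by
  rw [survivalDensity, Finset.sum_filter]
  simp only [Set.mem_singleton_iff, Finset.sum_ite_eq', Finset.mem_range, Order.lt_add_one_iff, hk,
    if_true]

lemma survivalDensity_anti (hp0 : 0 ≤ p) (hp1 : p ≤ 1) (hx : 0 ≤ x) (hxy : x ≤ y) :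
    survivalDensity p d y A ≤ survivalDensity p d x A := by
  have := sub_nonneg.2 hp1
  unfold survivalDensity
  gcongr

lemma survivalDensity_univ_pos (hd : 0 < d) (hp0 : 0 < p) (hp1 : p ≤ 1) (hr0 : 0 ≤ r)
    (hr1 : r < 1) : 0 < survivalDensity p d r Set.univ := by
  refine Finset.sum_pos' (fun k _ => ?_) ⟨d, by simp, ?_⟩
  · have := sub_nonneg.2 hp1
    have := sub_nonneg.2 (pow_le_one₀ hr0 hr1.le (n := k))
    positivity
  · have := sub_pos.2 (pow_lt_one₀ hr0 hr1 hd.ne')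
    simp only [Nat.choose_self, Nat.sub_self, pow_zero]
    positivity

lemma exists_lt_forall_survivalDensity_ge (hd : 3 ≤ d) (hp0 : 0 < p) (hp1 : p < 1) (hq0 : 0 ≤ q)
    (hq1 : q < 1) (hq : offspring p d q = q) (hη : 0 < η) (A : Set ℕ) :
    ∃ p₁, 0 < p₁ ∧ p₁ < p ∧
      ∀ j, survivalDensity p d q A - η ≤ survivalDensity p₁ d (extinctionProb p₁ d j) A := by
  have hnear_q : ∀ᶠ r in 𝓝[>] q, survivalDensity p d q A - η < survivalDensity p d r A :=
    ((continuous_survivalDensity.comp (Continuous.prodMk_right p)).tendsto q |>.mono_left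
      nhdsWithin_le_nhds).eventually_const_lt (sub_lt_self _ hη)
  obtain ⟨r, hr, hqr, hr1⟩ := (hnear_q.and (Ioo_mem_nhdsGT hq1)).exists
  have hnear_p : ∀ᶠ p₁ in 𝓝[<] p, survivalDensity p d q A - η < survivalDensity p₁ d r A :=
    ((continuous_survivalDensity.comp (Continuous.prodMk_left r)).tendsto p |>.mono_left
      nhdsWithin_le_nhds).eventually_const_lt hr
  -- A supersolution for `p` remains one for `p₁` and so bounds all extinction probabilities.
  have hsuper : ∀ᶠ p₁ in 𝓝[<] p, offspring p₁ d r < r :=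
    ((continuous_offspring.comp (Continuous.prodMk_left r)).tendsto p |>.mono_left
      nhdsWithin_le_nhds).eventually_lt_const (offspring_lt_self hd hp0 hp1.le hq0 hq hqr hr1)
  obtain ⟨p₁, ⟨hdens, hfix⟩, hp₁, hp₁p⟩ := ((hnear_p.and hsuper).and (Ioo_mem_nhdsLT hp0)).exists
  have hp₁1 := (hp₁p.trans hp1).le
  exact ⟨p₁, hp₁, hp₁p, fun j => hdens.le.trans (survivalDensity_anti hp₁.le hp₁1
    (extinctionProb_nonneg hp₁.le hp₁1)
    (extinctionProb_le hp₁.le hp₁1 (hq0.trans hqr.le) hfix.le))⟩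

lemma exists_forall_abs_survivalDensity_sub_le (hd : 3 ≤ d) (hp0 : 0 < p) (hp1 : p ≤ 1)
    (hq0 : 0 ≤ q) (hq1 : q < 1) (hq : offspring p d q = q) (𝒜 : Finset (Set ℕ)) (hη : 0 < η)
    (hκ : 0 < κ) :
    ∃ j : ℕ, (∀ A ∈ 𝒜,
      |survivalDensity p d (extinctionProb p d j) A - survivalDensity p d q A| ≤ η) ∧
      1 / ((j + 2 : ℕ) : ℝ) ≤ κ := by
  have hlim := tendsto_extinctionProb hd hp0 hp1 hq0 hq1 hq
  have hclose : ∀ᶠ j in atTop, ∀ A ∈ 𝒜,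
      |survivalDensity p d (extinctionProb p d j) A - survivalDensity p d q A| ≤ η :=
    𝒜.eventually_all.2 fun A _ =>
      ((continuous_survivalDensity.comp (Continuous.prodMk_right p)).tendsto q |>.comp
        hlim).eventually (Metric.closedBall_mem_nhds _ hη)
  have hdepth : ∀ᶠ j : ℕ in atTop, 1 / ((j + 2 : ℕ) : ℝ) ≤ κ :=
    ((tendsto_const_nhds.div_atTop tendsto_natCast_atTop_atTop).comp
      (tendsto_add_atTop_nat 2)).eventually_le_const hκ
  exact (hclose.and hdepth).exists

end Extinction

section DegreeDistribution

open Filter Topology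

variable {W : Type} [Fintype W] {G : SimpleGraph W} {g d m j k : ℕ} {A : Set ℕ}
  {s : Finset (Sym2 W)} {b p p₁ p₂ η ε : ℝ} {α β : ℕ → ℝ} {δ : Set ℕ → ℝ}

/-- Every largest component of `H` has about `α k * |W|` vertices of degree `k`, for `1 ≤ k ≤ d`. -/
def HasDegreeDistribution (H : SimpleGraph W) (d : ℕ) (α : ℕ → ℝ) (ε : ℝ) : Prop :=
  ∀ c₁ : H.ConnectedComponent, IsLargestComp H c₁ → ∀ k : ℕ, 1 ≤ k → k ≤ d →
    |(((compVerts H c₁).filter (fun v => (H.neighborSet v).ncard = k)).card : ℝ) /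
      Fintype.card W - α k| < ε

lemma hasDegreeDistribution_congr {H : SimpleGraph W} (h : ∀ k ≤ d, α k = β k) :
    HasDegreeDistribution H d α ε ↔ HasDegreeDistribution H d β ε := by
  refine forall₂_congr fun c₁ _ => forall₃_congr fun k _ hk => ?_
  rw [h k hk]

/-- The sets of degrees whose survivors have to be counted to find the degree distribution of a
largest component: all degrees together, and each of `1, …, d` on its own. -/
def degreeClasses (d : ℕ) : Finset (Set ℕ) :=
  insert Set.univ ((Finset.Icc 1 d).image ({·}))

lemma univ_mem_degreeClasses : Set.univ ∈ degreeClasses d :=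
  Finset.mem_insert_self _ _

lemma singleton_mem_degreeClasses (hk1 : 1 ≤ k) (hk : k ≤ d) : {k} ∈ degreeClasses d :=
  Finset.mem_insert_of_mem (Finset.mem_image_of_mem _ (Finset.mem_Icc.2 ⟨hk1, hk⟩))

lemma card_degreeClasses_le : (degreeClasses d).card ≤ d + 1 := by
  refine (Finset.card_insert_le _ _).trans (Nat.add_le_add_right (Finset.card_image_le.trans ?_) 1)
  rw [Nat.card_Icc, Nat.add_sub_cancel]

lemma mem_survivors_univ {x : W} : x ∈ survivors G m Set.univ s ↔ (front G x s m).Nonempty := by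
  simp [survivors]

lemma survivors_univ_subset_bigVerts :
    survivors G m Set.univ s ⊆ bigVerts (graphOf s) (m + 1) := fun _ hx =>
  Finset.mem_filter.2 ⟨Finset.mem_univ _,
    lt_card_compVerts_of_front_nonempty (mem_survivors_univ.1 hx)⟩

lemma compVerts_subset_survivors_univ (hc : G.Connected) (hg : (g : ℕ∞) ≤ G.egirth)
    (hs : s ⊆ edgeFinset' G) (hd : ∀ v, (G.neighborSet v).ncard ≤ d) (hm : 2 * m < g)
    {c : (graphOf s).ConnectedComponent} (h : (d + 1) ^ m < (compVerts (graphOf s) c).card) :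
    compVerts (graphOf s) c ⊆ survivors G m Set.univ s := by
  intro v hv
  rw [← mem_compVerts.1 hv] at h
  rw [mem_survivors_univ]
  contrapose! h
  exact card_compVerts_le_of_front_eq_empty hc hg hs hd hm h

lemma survivors_eq_filter (hs : s ⊆ edgeFinset' G) :
    survivors G m {k} s = (survivors G m Set.univ s).filter
      fun x => ((graphOf s).neighborSet x).ncard = k := by
  ext x
  simp only [survivors, Finset.mem_filter, Finset.mem_univ, true_and, Set.mem_univ, and_true,
    Set.mem_singleton_iff, ncard_neighborSet_graphOf hs]

lemma abs_card_filter_sub_card_filter_le_of_subset {ι : Type*} {S T : Finset ι} (h : S ⊆ T)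
    (P : ι → Prop) [DecidablePred P] :
    |((S.filter P).card : ℝ) - (T.filter P).card| ≤ T.card - S.card := by
  classical
  have hcard : (T.filter P).card = (S.filter P).card + ((T \ S).filter P).card := by
    rw [← Finset.card_union_of_disjoint
      (Finset.disjoint_filter_filter Finset.disjoint_sdiff), ← Finset.filter_union,
      Finset.union_sdiff_of_subset h]
  rw [hcard, Nat.cast_add, sub_add_cancel_left, abs_neg, Nat.abs_cast,
    ← Finset.cast_card_sdiff h]
  exact_mod_cast Finset.card_filter_le _ _

lemma hasDegreeDistribution_of_survivors [Nonempty W] (hc : G.Connected)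
    (hg : (g : ℕ∞) ≤ G.egirth) (hs : s ⊆ edgeFinset' G)
    (hd : ∀ v, (G.neighborSet v).ncard ≤ d) (hm : 2 * m < g) (hε : 8 * η < ε)
    (hlarge : ((d : ℝ) + 1) ^ m < (δ Set.univ - 4 * η) * Fintype.card W)
    (hδ : ∀ A ∈ degreeClasses d,
      |(survivors G m A s).card - Fintype.card W * δ A| ≤ 2 * η * Fintype.card W)
    (hbig : ∃ c, (δ Set.univ - 4 * η) * Fintype.card W ≤ (compVerts (graphOf s) c).card) :
    HasDegreeDistribution (graphOf s) d (fun k => δ {k}) ε := by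
  intro c₁ hc₁ k hk1 hk
  have hn : (0 : ℝ) < Fintype.card W := by exact_mod_cast Fintype.card_pos
  set C := compVerts (graphOf s) c₁
  have hC : (δ Set.univ - 4 * η) * Fintype.card W ≤ C.card := by
    obtain ⟨c, hc⟩ := hbig
    exact hc.trans (by exact_mod_cast hc₁ c)
  have hsub : C ⊆ survivors G m Set.univ s :=
    compVerts_subset_survivors_univ hc hg hs hd hm (by exact_mod_cast hlarge.trans_le hC)
  have hcount := abs_card_filter_sub_card_filter_le_of_subset hsub
    fun v => ((graphOf s).neighborSet v).ncard = k
  rw [← survivors_eq_filter hs] at hcount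
  have htotal := (abs_le.1 (hδ _ univ_mem_degreeClasses)).2
  have hdegree := hδ _ (singleton_mem_degreeClasses hk1 hk)
  rw [div_sub' hn.ne', abs_div, abs_of_pos hn, div_lt_iff₀ hn]
  calc _ ≤ _ := abs_sub_le _ ((survivors G m {k} s).card : ℝ) _
    _ ≤ 8 * η * Fintype.card W := by linarith
    _ < ε * Fintype.card W := by gcongr

lemma hasDegreeDistribution_of_sprinkling [Nonempty W] {t : Finset (Sym2 W)} {μ : Set ℕ → ℝ}
    {μ₁ : ℝ} (hc : G.Connected) (hg : (g : ℕ∞) ≤ G.egirth) (ht : t ⊆ edgeFinset' G)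
    (hd : ∀ v, (G.neighborSet v).ncard ≤ d) (hm : 2 * m < g) (hε : 8 * η < ε)
    (hlarge : ((d : ℝ) + 1) ^ m < (δ Set.univ - 4 * η) * Fintype.card W)
    (hμ₁ : δ Set.univ - η ≤ μ₁) (hμ : ∀ A ∈ degreeClasses d, |μ A - δ A| ≤ η)
    (hs : |(survivors G m Set.univ s).card - Fintype.card W * μ₁| < η * Fintype.card W)
    (ht' : ∀ A ∈ degreeClasses d,
      |(survivors G m A t).card - Fintype.card W * μ A| < η * Fintype.card W)
    (hmerge : ∃ c, ((bigVerts (graphOf s) (m + 1)).card : ℝ) - 2 * (η * Fintype.card W) ≤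
      (compVerts (graphOf t) c).card) :
    HasDegreeDistribution (graphOf t) d (fun k => δ {k}) ε := by
  have hn : (0 : ℝ) ≤ Fintype.card W := Nat.cast_nonneg _
  refine hasDegreeDistribution_of_survivors hc hg ht hd hm hε hlarge (fun A hA => ?_) ?_
  · calc _ ≤ _ := abs_sub_le _ (Fintype.card W * μ A) _
      _ ≤ η * Fintype.card W + Fintype.card W * η := by
        rw [← mul_sub, abs_mul, Nat.abs_cast]
        gcongr
        exacts [(ht' A hA).le, hμ A hA]
      _ = 2 * η * Fintype.card W := by ring
  · obtain ⟨c, hmerge⟩ := hmerge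
    have hbig : ((survivors G m Set.univ s).card : ℝ) ≤ (bigVerts (graphOf s) (m + 1)).card := by
      exact_mod_cast Finset.card_le_card survivors_univ_subset_bigVerts
    have hmean := mul_le_mul_of_nonneg_left hμ₁ hn
    exact ⟨c, by linarith [(abs_lt.1 hs).1]⟩

lemma one_sub_le_percProb_hasDegreeDistribution [DecidableEq W] [Nonempty W]
    (hG : IsRegularExpander G b d) (hb : 0 < b) (hg : (g : ℕ∞) ≤ G.egirth) (hj : 2 * j + 2 < g)
    (hp₁0 : 0 ≤ p₁) (hp₁1 : p₁ ≤ 1) (hp₂0 : 0 ≤ p₂) (hp₂1 : p₂ ≤ 1) (hη : 0 < η)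
    (hε : 8 * η < ε) {L : ℕ} (hL : 2 * d < L * (b * η))
    (hlarge : ((d : ℝ) + 1) ^ (j + 1) < (δ Set.univ - 4 * η) * Fintype.card W)
    (hδ₁ : δ Set.univ - η ≤ survivalDensity p₁ d (extinctionProb p₁ d j) Set.univ)
    (hp : 1 - (1 - p₁) * (1 - p₂) = p)
    (hδ : ∀ A ∈ degreeClasses d, |survivalDensity p d (extinctionProb p d j) A - δ A| ≤ η) :
    1 - ((d + 2) * (2 * Real.exp (-(η ^ 2 / (2 * (((d : ℝ) + 1) ^ (j + 1)) ^ 2 * d) *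
        Fintype.card W))) +
      Real.exp ((1 / (j + 2 : ℕ) - p₂ ^ L * (b * η / (2 * L))) * Fintype.card W)) ≤
    percProb G p fun H => HasDegreeDistribution H d (fun k => δ {k}) ε := by
  have hc := hG.1.connected hb
  have hp0 : 0 ≤ p := by nlinarith
  have hp1 : p ≤ 1 := by nlinarith
  set τ := 2 * Real.exp (-(η ^ 2 / (2 * (((d : ℝ) + 1) ^ (j + 1)) ^ 2 * d) * Fintype.card W))
  let Deviates (r : ℝ) (A : Set ℕ) (s : Finset (Sym2 W)) : Prop := η * Fintype.card W ≤
    |(survivors G (j + 1) A s).card - Fintype.card W * survivalDensity r d (extinctionProb r d j) A|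
  let Merges (s t : Finset (Sym2 W)) : Prop :=
    ∃ c, ((bigVerts (graphOf s) (j + 2)).card : ℝ) - 2 * (η * Fintype.card W) ≤
      (compVerts (graphOf (s ∪ t)) c).card
  have hsprinkle : subsetProb p (edgeFinset' G)
        (fun s => ¬ HasDegreeDistribution (graphOf s) d (fun k => δ {k}) ε) ≤
      subsetProb p (edgeFinset' G) (fun s => ∃ A ∈ degreeClasses d, Deviates p A s) +
        (subsetProb p₁ (edgeFinset' G) (Deviates p₁ Set.univ) +
          Real.exp ((1 / (j + 2 : ℕ) - p₂ ^ L * (b * η / (2 * L))) * Fintype.card W)) := by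
    refine subsetProb_le_of_union_imp (T := fun s t => ¬ Merges s t) hp₁0 hp₁1 hp₂0 hp₂1 hp
      (hG.1.subsetProb_not_exists_large_comp_le hb.le hp₂0 hp₂1 hη hL (Nat.succ_pos _))
      fun s hs t ht => ?_
    contrapose!
    rintro ⟨hdev, hdev₁, hmerge⟩
    exact hasDegreeDistribution_of_sprinkling hc hg (Finset.union_subset hs ht) hG.1.1 (by omega)
      hε hlarge hδ₁ hδ (not_le.1 hdev₁) (fun A hA => not_le.1 (hdev A hA)) hmerge
  have hdev : subsetProb p (edgeFinset' G) (fun s => ∃ A ∈ degreeClasses d, Deviates p A s) ≤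
      (degreeClasses d).card * τ :=
    subsetProb_exists_le hp0 hp1 fun A _ =>
      subsetProb_le_abs_card_survivors_sub_le hc hg hG.2 hp0 hp1 A hj hη.le
  have hdev₁ : subsetProb p₁ (edgeFinset' G) (Deviates p₁ Set.univ) ≤ τ :=
    subsetProb_le_abs_card_survivors_sub_le hc hg hG.2 hp₁0 hp₁1 _ hj hη.le
  have hcard : (degreeClasses d).card * τ ≤ (d + 1) * τ := by
    gcongr
    exact_mod_cast card_degreeClasses_le
  rw [subsetProb_not] at hsprinkle
  change _ ≤ subsetProb p (edgeFinset' G) _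
  linarith

lemma exists_pos_mul_exp_add_exp_le {κ₁ κ₂ : ℝ} (hκ₁ : 0 < κ₁) (hκ₂ : 0 < κ₂) (C : ℝ) :
    ∃ c > 0, ∃ N : ℕ, ∀ n : ℕ, N ≤ n →
      C * Real.exp (-(κ₁ * n)) + Real.exp (-(κ₂ * n)) ≤ Real.exp (-c * n) := by
  have hpos := lt_min hκ₁ hκ₂
  obtain ⟨c, hc0, hc⟩ := exists_between hpos
  have hdecay : ∀ {κ}, c < κ → Tendsto (fun n : ℕ => Real.exp (-((κ - c) * n))) atTop (𝓝 0) :=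
    fun h => Real.tendsto_exp_neg_atTop_nhds_zero.comp
      (tendsto_natCast_atTop_atTop.const_mul_atTop (sub_pos.2 h))
  have hlim := ((hdecay (hc.trans_le (min_le_left _ _))).const_mul C).add
    (hdecay (hc.trans_le (min_le_right _ _)))
  rw [mul_zero, zero_add] at hlim
  obtain ⟨N, hN⟩ := eventually_atTop.1 (hlim.eventually_le_const one_pos)
  refine ⟨c, hc0, N, fun n hn => ?_⟩
  calc C * Real.exp (-(κ₁ * n)) + Real.exp (-(κ₂ * n))
      = (C * Real.exp (-((κ₁ - c) * n)) + Real.exp (-((κ₂ - c) * n))) * Real.exp (-c * n) := by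
        rw [add_mul, mul_assoc, ← Real.exp_add, ← Real.exp_add]
        ring_nf
    _ ≤ Real.exp (-c * n) := mul_le_of_le_one_left (Real.exp_pos _).le (hN n hn)

lemma exists_one_sub_mul_one_sub_eq (hp₁p : p₁ < p) (hp1 : p < 1) :
    ∃ p₂, 0 < p₂ ∧ p₂ ≤ 1 ∧ 1 - (1 - p₁) * (1 - p₂) = p := by
  have hp₁1 : 0 < 1 - p₁ := by linarith
  exact ⟨(p - p₁) / (1 - p₁), div_pos (sub_pos.2 hp₁p) hp₁1, (div_le_one hp₁1).2 (by linarith), by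
    field_simp; ring⟩

lemma exists_forall_one_sub_exp_le_percProb {q : ℝ} (hd : 3 ≤ d) (hp0 : 0 < p) (hp1 : p < 1)
    (hq0 : 0 ≤ q) (hq1 : q < 1) (hq : offspring p d q = q) (hε : 0 < ε) (hb : 0 < b) :
    ∃ c > 0, ∃ R : ℕ, ∀ (W : Type) [Fintype W] [DecidableEq W] (G : SimpleGraph W),
      IsRegularExpander G b d → (R : ℕ∞) ≤ G.egirth → R ≤ Fintype.card W →
      1 - Real.exp (-c * Fintype.card W) ≤ percProb G p fun H =>
        HasDegreeDistribution H d (fun k => survivalDensity p d q {k}) ε := by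
  have hθ := survivalDensity_univ_pos (by omega : 0 < d) hp0 hp1.le hq0 hq1
  set θ := survivalDensity p d q Set.univ
  obtain ⟨η, hη, hηmin⟩ := exists_between (show 0 < min (ε / 8) (θ / 4) by positivity)
  obtain ⟨hηε, hηθ⟩ := lt_min_iff.1 hηmin
  obtain ⟨p₁, hp₁, hp₁p, hδ₁⟩ :=
    exists_lt_forall_survivalDensity_ge hd hp0 hp1 hq0 hq1 hq hη Set.univ
  obtain ⟨p₂, hp₂, hp₂1, hp₁₂⟩ := exists_one_sub_mul_one_sub_eq hp₁p hp1
  obtain ⟨L, hL⟩ := exists_nat_gt (2 * d / (b * η))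
  have hL0 : (0 : ℝ) < L := lt_trans (by positivity) hL
  set κ := p₂ ^ L * (b * η / (2 * L))
  have hκ : 0 < κ := by positivity
  obtain ⟨j, hδ, hj⟩ := exists_forall_abs_survivalDensity_sub_le hd hp0 hp1.le hq0 hq1 hq
    (degreeClasses d) hη (half_pos hκ)
  set κ₁ := η ^ 2 / (2 * (((d : ℝ) + 1) ^ (j + 1)) ^ 2 * d)
  obtain ⟨c, hc, N, hN⟩ := exists_pos_mul_exp_add_exp_le (show 0 < κ₁ by positivity)
    (half_pos hκ) ((d + 2) * 2)
  obtain ⟨M, hM⟩ := exists_nat_gt (((d : ℝ) + 1) ^ (j + 1) / (θ - 4 * η))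
  refine ⟨c, hc, 2 * j + 3 + M + N, fun W _ _ G hG hg hcard => ?_⟩
  have : Nonempty W := Fintype.card_pos_iff.1 (by omega)
  have hMn : (M : ℝ) ≤ Fintype.card W := by exact_mod_cast (by omega)
  have hlarge : ((d : ℝ) + 1) ^ (j + 1) < (θ - 4 * η) * Fintype.card W :=
    (div_lt_iff₀' (by linarith)).1 (hM.trans_le hMn)
  have hmerge : (1 / (j + 2 : ℕ) - κ) * (Fintype.card W : ℝ) ≤ -(κ / 2 * Fintype.card W) := by
    rw [← neg_mul]
    gcongr
    linarith
  refine le_trans ?_ (one_sub_le_percProb_hasDegreeDistribution hG hb hg (by omega) hp₁.le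
    (by linarith) hp₂.le hp₂1 hη (by linarith) ((div_lt_iff₀ (by positivity)).1 hL) hlarge
    (hδ₁ j) hp₁₂ hδ)
  linarith [hN (Fintype.card W) (by omega), Real.exp_le_exp.2 hmerge]

end DegreeDistribution

section Girth

variable {W : Type*} {G : SimpleGraph W}

lemma natCast_girth_le_egirth : (G.girth : ℕ∞) ≤ G.egirth :=
  ENat.natCast_toNat_le_self _

lemma girth_le_card [Fintype W] : G.girth ≤ Fintype.card W := by
  by_cases hG : G.IsAcyclic
  · simp [SimpleGraph.girth_eq_zero.2 hG]
  · obtain ⟨v, w, hw, hlen⟩ := SimpleGraph.exists_girth_eq_length.2 hG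
    have hpath := hw.isPath_tail.length_lt
    rw [SimpleGraph.Walk.length_tail] at hpath
    omega

end Girth

theorem giant_degree_distribution (d : ℕ) (hd : 3 ≤ d) (p q : ℝ)
    (hp : 1 / ((d : ℝ) - 1) < p) (hp1 : p < 1)
    (hq0 : 0 ≤ q) (hq1 : q < 1)
    (hq : q = (1 - p + p * q) ^ (d - 1))
    (ε b : ℝ) (hε : 0 < ε) (hb : 0 < b) :
    ∃ c > (0:ℝ), ∃ R : ℕ, 0 < R ∧
      ∀ (V : Type) [Fintype V] [DecidableEq V] (G : SimpleGraph V),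
        IsRegularExpander G b d → (R : ℕ∞) ≤ G.girth →
        1 - Real.exp (-c * Fintype.card V) ≤
          percProb G p (fun H =>
            ∀ c₁ : H.ConnectedComponent, IsLargestComp H c₁ →
              ∀ k : ℕ, 1 ≤ k → k ≤ d →
                |(((compVerts H c₁).filter
                      (fun v => (H.neighborSet v).ncard = k)).card : ℝ) / Fintype.card V
                  - (d.choose k : ℝ) * p ^ k * (1 - p) ^ (d - k) * (1 - q ^ k)| < ε) := by
  have hd1 : (0 : ℝ) < d - 1 := sub_pos.2 (by exact_mod_cast (by omega : 1 < d))
  have hp0 : 0 < p := (one_div_pos.2 hd1).trans hp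
  obtain ⟨c, hc, R, hR⟩ :=
    exists_forall_one_sub_exp_le_percProb hd hp0 hp1 hq0 hq1 hq.symm hε hb
  refine ⟨c, hc, R + 1, R.succ_pos, fun V _ _ G hG hgirth => ?_⟩
  have hR_le : (R : ℕ∞) ≤ G.girth := (Nat.cast_le.2 R.le_succ).trans hgirth
  refine (hR V G hG (hR_le.trans natCast_girth_le_egirth)
    ((Nat.cast_le.1 hR_le).trans girth_le_card)).trans_eq ?_
  refine congrArg (percProb G p) (funext fun H => propext ?_)
  exact hasDegreeDistribution_congr fun k hk => survivalDensity_singleton hk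

end Percolation

end
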